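/- Let Ω⊂ℝⁿ be a simply connected domain and f:Ω→ℝᵐ a locally Lipschitz map satisfying rank Df≤1 almost everywhere in Ω. Then there exist C^∞-smooth maps f_i:Ω→ℝᵐ with rank Df_i≤1 everywhere in Ω such that f_i→f uniformly on every compact subset K⊂Ω. -/

import Mathlib

open Set Metric MeasureTheory
open scoped NNReal ENNReal Topology

/-- `f` is locally Lipschitz on the open set `Ω`. -/
def LocLipOn {E X : Type*} [NormedAddCommGroup E] [NormedSpace ℝ E] [PseudoMetricSpace X]
    (f : E → X) (Ω : Set E) : Prop :=
  ∀ x ∈ Ω, ∃ r > 0, Metric.ball x r ⊆ Ω ∧ ∃ K : ℝ≥0, LipschitzOnWith K f (Metric.ball x r)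

/-- The rank of the derivative of `f` at `x`. -/
noncomputable def derivRank {E F : Type*} [NormedAddCommGroup E] [NormedSpace ℝ E]
    [NormedAddCommGroup F] [NormedSpace ℝ F] (f : E → F) (x : E) : ℕ :=
  Module.finrank ℝ (LinearMap.range ((fderiv ℝ f x) : E →ₗ[ℝ] F))

/-!
Since `rank Df ≤ 1`, two functions `u`, `v` whose increments are controlled by those of `f` satisfy
`du ∧ dv = 0` almost everywhere. By mollification the weakly closed `1`-form `u dv` then has local
primitives, with increments `w z - w x = u x (v z - v x) + O(|z - x|²)`, and these primitives glue
on a simply connected domain.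

Let `D` be the largest function with `D x₀ = 0` whose increments along segments are at most the
length of the image of the segment under `f`. For a connected open set on which `D` takes values
in a short interval, one builds from `D` and primitives of `u d(ℓ ∘ f)` competitors to `D`; if `f`
oscillated much on this set, one of them would exceed `D`. So `f` is nearly constant on the
connected components of the level bands of `D`, and a smooth approximation of `D` may be used to
interpolate between values of `f` on consecutive components. The result is locally a function
`P + s Q` of one real variable `s`, hence of rank at most one.
-/

section WeaklyClosed

variable {E : Type*} [NormedAddCommGroup E] [NormedSpace ℝ E]

lemma exists_lipschitzWith_mul {X : Type*} [PseudoMetricSpace X] {C D : ℝ≥0} {u v : X → ℝ}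
    (hu : LipschitzWith C u) (hv : LipschitzWith D v) {M N : ℝ} (hM : ∀ x, ‖u x‖ ≤ M)
    (hN : ∀ x, ‖v x‖ ≤ N) : ∃ L, LipschitzWith L fun x => u x * v x := by
  refine ⟨(M * D + C * N).toNNReal, LipschitzWith.of_dist_le' fun x y => ?_⟩
  calc dist (u x * v x) (u y * v y) = ‖u x * (v x - v y) + (u x - u y) * v y‖ := by
        rw [dist_eq_norm]; ring_nf
    _ ≤ ‖u x‖ * dist (v x) (v y) + dist (u x) (u y) * ‖v y‖ := by
        rw [dist_eq_norm, dist_eq_norm, ← norm_mul, ← norm_mul]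
        exact norm_add_le _ _
    _ ≤ M * (D * dist x y) + C * dist x y * N := by
        gcongr
        · exact (norm_nonneg _).trans (hM x)
        exacts [hM x, hv.dist_le_mul x y, hu.dist_le_mul x y, hN y]
    _ = (M * D + C * N) * dist x y := by ring

lemma integrable_of_locallyIntegrable_of_hasCompactSupport {X F : Type*} [TopologicalSpace X]
    [MeasurableSpace X] [OpensMeasurableSpace X] [NormedAddCommGroup F] {μ : Measure X}
    {ω : X → F} (hω : LocallyIntegrable ω μ) (hωc : HasCompactSupport ω) : Integrable ω μ :=
  (integrableOn_iff_integrable_of_support_subset (subset_tsupport ω)).1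
    (hω.integrableOn_isCompact hωc)

/-- The wedge product of two covectors vanishes: `α ∧ β = 0`. -/
def WedgeEqZero (α β : E →L[ℝ] ℝ) : Prop :=
  ∀ ξ ζ : E, α ξ * β ζ = α ζ * β ξ

variable [MeasurableSpace E]

/-- The `1`-form `ω` is closed on `U` in the sense of distributions, tested against `C¹` functions
with compact support. -/
def WeaklyClosedOn (μ : Measure E) (ω : E → E →L[ℝ] ℝ) (U : Set E) : Prop :=
  ∀ ψ : E → ℝ, ContDiff ℝ 1 ψ → HasCompactSupport ψ → Function.support ψ ⊆ U → ∀ ξ ζ : E,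
    ∫ x, fderiv ℝ ψ x ξ * ω x ζ ∂μ = ∫ x, fderiv ℝ ψ x ζ * ω x ξ ∂μ

variable [BorelSpace E] [FiniteDimensional ℝ E] {μ : Measure E} {C D : ℝ≥0} {u v : E → ℝ}

lemma locallyIntegrable_fderiv [IsLocallyFiniteMeasure μ] (hu : LipschitzWith C u) :
    LocallyIntegrable (fun x => fderiv ℝ u x) μ :=
  (memLp_top_of_bound (measurable_fderiv ℝ u).aestronglyMeasurable C
    (.of_forall fun _ => norm_fderiv_le_of_lipschitz ℝ hu)).locallyIntegrable le_top

variable [μ.IsAddHaarMeasure]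

lemma integrable_fderiv_of_hasCompactSupport (hu : LipschitzWith C u)
    (huc : HasCompactSupport u) : Integrable (fun x => fderiv ℝ u x) μ :=
  integrable_of_locallyIntegrable_of_hasCompactSupport (locallyIntegrable_fderiv hu)
    (huc.fderiv (𝕜 := ℝ))

lemma integrable_lineDeriv_of_hasCompactSupport (hu : LipschitzWith C u)
    (huc : HasCompactSupport u) (ξ : E) : Integrable (fun x => lineDeriv ℝ u x ξ) μ := by
  refine ((integrable_fderiv_of_hasCompactSupport hu huc).apply_continuousLinearMap ξ).congr ?_
  filter_upwards [hu.ae_differentiableAt (μ := μ)] with x hx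
  exact hx.lineDeriv_eq_fderiv.symm

lemma integrable_fderiv_mul_fderiv (hu : LipschitzWith C u) (hv : LipschitzWith D v)
    (hvc : HasCompactSupport v) (ξ ζ : E) :
    Integrable (fun x => fderiv ℝ u x ξ * fderiv ℝ v x ζ) μ :=
  ((integrable_fderiv_of_hasCompactSupport hv hvc).apply_continuousLinearMap ζ).bdd_mul
    (measurable_fderiv_apply_const ℝ u ξ).aestronglyMeasurable
    (.of_forall fun x => ((fderiv ℝ u x).le_opNorm ξ).trans
      (mul_le_mul_of_nonneg_right (norm_fderiv_le_of_lipschitz ℝ hu) (norm_nonneg ξ)))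

lemma integral_lineDeriv_mul_translate (hu : LipschitzWith C u) (hv : LipschitzWith D v)
    (hvc : HasCompactSupport v) (ξ z : E) :
    ∫ x, lineDeriv ℝ u x ξ * v (x + z) ∂μ = ∫ x, lineDeriv ℝ v x (-ξ) * u (x - z) ∂μ := by
  have hvz : LipschitzWith D fun x => v (x + z) := by
    simpa [Function.comp_def] using hv.comp (isometry_add_right z).lipschitz
  have hderiv : ∀ x, lineDeriv ℝ (fun x => v (x + z)) x (-ξ) = lineDeriv ℝ v (x + z) (-ξ) :=
    fun x => by simp only [lineDeriv, add_right_comm]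
  rw [hu.integral_lineDeriv_mul_eq hvz (hvc.comp_homeomorph (Homeomorph.addRight z))]
  simp only [hderiv]
  simpa using integral_add_right_eq_self (fun x => lineDeriv ℝ v x (-ξ) * u (x - z)) z

/-- Both sides are limits of the same difference quotients, the increment in direction `ζ` being
moved from one factor to the other. -/
lemma integral_lineDeriv_mul_lineDeriv_comm (hu : LipschitzWith C u) (huc : HasCompactSupport u)
    (hv : LipschitzWith D v) (hvc : HasCompactSupport v) (ξ ζ : E) :
    ∫ x, lineDeriv ℝ v x ζ * lineDeriv ℝ u x ξ ∂μ =
      ∫ x, lineDeriv ℝ v x ξ * lineDeriv ℝ u x ζ ∂μ := by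
  have hu' := integrable_lineDeriv_of_hasCompactSupport (μ := μ) hu huc ξ
  have hv' := integrable_lineDeriv_of_hasCompactSupport (μ := μ) hv hvc (-ξ)
  have quotients : ∀ t : ℝ, ∫ x, (t⁻¹ • (v (x + t • ζ) - v x)) * lineDeriv ℝ u x ξ ∂μ =
      ∫ x, (t⁻¹ • (u (x + t • (-ζ)) - u x)) * lineDeriv ℝ v x (-ξ) ∂μ := by
    intro t
    obtain ⟨M, hM⟩ := hu.continuous.bounded_above_of_compact_support huc
    obtain ⟨N, hN⟩ := hv.continuous.bounded_above_of_compact_support hvc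
    have hui : ∀ z, Integrable (fun x => lineDeriv ℝ u x ξ * v (x + z)) μ := fun z =>
      hu'.mul_bdd (hv.continuous.comp (continuous_add_const z)).aestronglyMeasurable
        (.of_forall fun x => hN (x + z))
    have hvi : ∀ z, Integrable (fun x => lineDeriv ℝ v x (-ξ) * u (x - z)) μ := fun z =>
      hv'.mul_bdd (hu.continuous.comp (continuous_sub_right z)).aestronglyMeasurable
        (.of_forall fun x => hM (x - z))
    calc _ = t⁻¹ * (∫ x, lineDeriv ℝ u x ξ * v (x + t • ζ) ∂μ -
            ∫ x, lineDeriv ℝ u x ξ * v (x + 0) ∂μ) := by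
          rw [← integral_sub (hui _) (hui _), ← integral_const_mul]
          congr with x
          rw [smul_eq_mul, add_zero]
          ring
      _ = t⁻¹ * (∫ x, lineDeriv ℝ v x (-ξ) * u (x - t • ζ) ∂μ -
            ∫ x, lineDeriv ℝ v x (-ξ) * u (x - 0) ∂μ) := by
          simp only [integral_lineDeriv_mul_translate hu hv hvc]
      _ = _ := by
          rw [← integral_sub (hvi _) (hvi _), ← integral_const_mul]
          congr with x
          rw [smul_eq_mul, sub_zero, smul_neg, ← sub_eq_add_neg]
          ring
  have hlim := hv.integral_inv_smul_sub_mul_tendsto_integral_lineDeriv_mul hu' ζ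
  simp only [quotients] at hlim
  rw [tendsto_nhds_unique hlim
    (hu.integral_inv_smul_sub_mul_tendsto_integral_lineDeriv_mul hv' (-ζ))]
  simp only [lineDeriv_neg, neg_mul_neg, mul_comm]

lemma integral_fderiv_mul_fderiv_comm (hu : LipschitzWith C u) (huc : HasCompactSupport u)
    (hv : LipschitzWith D v) (hvc : HasCompactSupport v) (ξ ζ : E) :
    ∫ x, fderiv ℝ v x ζ * fderiv ℝ u x ξ ∂μ = ∫ x, fderiv ℝ v x ξ * fderiv ℝ u x ζ ∂μ := by
  have key : ∀ α β : E, ∫ x, fderiv ℝ v x α * fderiv ℝ u x β ∂μ =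
      ∫ x, lineDeriv ℝ v x α * lineDeriv ℝ u x β ∂μ := by
    intro α β
    apply integral_congr_ae
    filter_upwards [hu.ae_differentiableAt (μ := μ), hv.ae_differentiableAt (μ := μ)]
      with x hx hx'
    rw [hx.lineDeriv_eq_fderiv, hx'.lineDeriv_eq_fderiv]
  rw [key, key, integral_lineDeriv_mul_lineDeriv_comm hu huc hv hvc]

/-- For a test function `ψ`, apply the symmetry of second derivatives to `v` and `ψ u`. -/
lemma weaklyClosedOn_smul_fderiv (hu : LipschitzWith C u) (huc : HasCompactSupport u)
    (hv : LipschitzWith D v) (hvc : HasCompactSupport v) {U : Set E}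
    (hwedge : ∀ᵐ x ∂μ, x ∈ U → WedgeEqZero (fderiv ℝ u x) (fderiv ℝ v x)) :
    WeaklyClosedOn μ (fun x => u x • fderiv ℝ v x) U := by
  intro ψ hψ hψc hψU ξ ζ
  obtain ⟨P, hP⟩ := hψ.lipschitzWith_of_hasCompactSupport hψc one_ne_zero
  obtain ⟨M, hM⟩ := hu.continuous.bounded_above_of_compact_support huc
  obtain ⟨N, hN⟩ := hψ.continuous.bounded_above_of_compact_support hψc
  obtain ⟨L, hL⟩ := exists_lipschitzWith_mul hP hu hN hM
  have hprod : ∀ᵐ x ∂μ,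
      fderiv ℝ (fun x => ψ x * u x) x ξ * fderiv ℝ v x ζ -
        fderiv ℝ (fun x => ψ x * u x) x ζ * fderiv ℝ v x ξ =
      u x * (fderiv ℝ ψ x ξ * fderiv ℝ v x ζ) - u x * (fderiv ℝ ψ x ζ * fderiv ℝ v x ξ) := by
    filter_upwards [hwedge, hu.ae_differentiableAt (μ := μ)] with x hx hux
    have hwedge' : ψ x * (fderiv ℝ u x ξ * fderiv ℝ v x ζ) =
        ψ x * (fderiv ℝ u x ζ * fderiv ℝ v x ξ) := by
      by_cases h0 : ψ x = 0
      · rw [h0, zero_mul, zero_mul]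
      · rw [hx (hψU h0) ξ ζ]
    rw [fderiv_fun_mul (hψ.differentiable one_ne_zero x) hux]
    simp only [add_apply, smul_apply, smul_eq_mul]
    linear_combination hwedge'
  have hi : ∀ α β, Integrable (fun x => u x * (fderiv ℝ ψ x α * fderiv ℝ v x β)) μ := fun α β =>
    (integrable_fderiv_mul_fderiv hP hv hvc α β).bdd_mul hu.continuous.aestronglyMeasurable
      (.of_forall hM)
  have hcomm := integral_fderiv_mul_fderiv_comm (μ := μ) hv hvc hL hψc.mul_right ζ ξ
  rw [← sub_eq_zero, ← integral_sub (integrable_fderiv_mul_fderiv hL hv hvc _ _)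
    (integrable_fderiv_mul_fderiv hL hv hvc _ _), integral_congr_ae hprod,
    integral_sub (hi _ _) (hi _ _), sub_eq_zero] at hcomm
  simpa only [smul_apply, smul_eq_mul, mul_left_comm] using hcomm

end WeaklyClosed

section Mollification

open ContinuousLinearMap (lsmul)
open scoped Convolution

variable {E : Type*} [NormedAddCommGroup E] [NormedSpace ℝ E] [FiniteDimensional ℝ E]
  [MeasurableSpace E] [BorelSpace E] {μ : Measure E} [μ.IsAddHaarMeasure]

lemma fderiv_convolution_apply {φ : E → ℝ} (hφ : ContDiff ℝ 1 φ) (hφc : HasCompactSupport φ)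
    {ω : E → E →L[ℝ] ℝ} (hω : LocallyIntegrable ω μ) (p ξ ζ : E) :
    fderiv ℝ (φ ⋆[lsmul ℝ ℝ, μ] ω) p ξ ζ = ∫ y, fderiv ℝ φ (p - y) ξ * ω y ζ ∂μ := by
  have hint : Integrable (fun t => (lsmul ℝ ℝ (E := E →L[ℝ] ℝ)).precompL E (fderiv ℝ φ t)
      (ω (p - t))) μ :=
    HasCompactSupport.convolutionExists_left (𝕜 := ℝ) (F := E →L[ℝ] E →L[ℝ] ℝ) _
      (hφc.fderiv (𝕜 := ℝ)) (hφ.continuous_fderiv one_ne_zero) hω p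
  rw [(hφc.hasFDerivAt_convolution_left (lsmul ℝ ℝ) hφ hω p).fderiv, convolution_def,
    ContinuousLinearMap.integral_apply hint,
    ContinuousLinearMap.integral_apply (hint.apply_continuousLinearMap ξ),
    ← integral_sub_left_eq_self _ μ p]
  simp only [ContinuousLinearMap.precompL_apply, sub_sub_cancel,
    ContinuousLinearMap.lsmul_apply, smul_apply, smul_eq_mul]

lemma fderiv_convolution_symm {φ : E → ℝ} (hφ : ContDiff ℝ 1 φ) (hφc : HasCompactSupport φ)
    {ω : E → E →L[ℝ] ℝ} (hω : LocallyIntegrable ω μ) {U : Set E} (hclosed : WeaklyClosedOn μ ω U)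
    {p : E} (hp : ∀ y, φ (p - y) ≠ 0 → y ∈ U) (ξ ζ : E) :
    fderiv ℝ (φ ⋆[lsmul ℝ ℝ, μ] ω) p ξ ζ = fderiv ℝ (φ ⋆[lsmul ℝ ℝ, μ] ω) p ζ ξ := by
  have hreflect : ∀ y, fderiv ℝ (fun y => φ (p - y)) y = -fderiv ℝ φ (p - y) := by
    intro y
    have h := (hφ.differentiable one_ne_zero (p - y)).hasFDerivAt.comp y
      ((hasFDerivAt_id y).const_sub p)
    simpa [Function.comp_def] using h.fderiv
  have h := hclosed (fun y => φ (p - y)) (hφ.comp (contDiff_const.sub contDiff_id))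
    (hφc.comp_homeomorph (Homeomorph.subLeft p)) hp ξ ζ
  simp only [hreflect, neg_apply, neg_mul, integral_neg, neg_inj] at h
  rw [fderiv_convolution_apply hφ hφc hω, fderiv_convolution_apply hφ hφc hω, h]

lemma exists_hasFDerivAt_convolution {φ : E → ℝ} (hφ : ContDiff ℝ 1 φ)
    (hφc : HasCompactSupport φ) {ω : E → E →L[ℝ] ℝ} (hω : LocallyIntegrable ω μ) {c : E}
    {r δ : ℝ} (hφδ : Function.support φ ⊆ ball 0 δ)
    (hclosed : WeaklyClosedOn μ ω (ball c (r + δ))) :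
    ∃ W : E → ℝ, ∀ p ∈ ball c r, HasFDerivAt W ((φ ⋆[lsmul ℝ ℝ, μ] ω) p) p := by
  refine (convex_ball c r).exists_forall_hasFDerivAt_of_fderiv_symmetric isOpen_ball
    (fun p _ => (hφc.hasFDerivAt_convolution_left (lsmul ℝ ℝ) hφ hω
      p).differentiableAt.differentiableWithinAt) fun p hp => ?_
  refine fderiv_convolution_symm hφ hφc hω hclosed fun y hy => ?_
  have hpy : dist p y < δ := by simpa [dist_eq_norm] using hφδ hy
  rw [mem_ball] at hp ⊢
  linarith [dist_triangle_left y c p]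

lemma hasFDerivAt_convolution_of_lipschitzWith {φ : E → ℝ} (hφ : Continuous φ)
    (hφc : HasCompactSupport φ) {D : ℝ≥0} {v : E → ℝ} (hv : LipschitzWith D v) (p : E) :
    HasFDerivAt (φ ⋆[lsmul ℝ ℝ, μ] v) ((φ ⋆[lsmul ℝ ℝ, μ] fderiv ℝ v) p) p := by
  have hdiff : ∀ᵐ t ∂μ, HasFDerivAt v (fderiv ℝ v (p - t)) (p - t) :=
    (quasiMeasurePreserving_sub_left μ p).ae
      (hv.ae_differentiableAt.mono fun _ hx => hx.hasFDerivAt)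
  have hmeas : ∀ q, Continuous fun t => φ t * v (q - t) := fun q =>
    hφ.mul (hv.continuous.comp (continuous_const.sub continuous_id))
  refine (hasFDerivAt_integral_of_dominated_loc_of_lip (F := fun q t => φ t * v (q - t))
    (F' := fun t => φ t • fderiv ℝ v (p - t)) (bound := fun t => ‖φ t‖ * D) Filter.univ_mem
    (.of_forall fun q => (hmeas q).aestronglyMeasurable)
    ((hmeas p).integrable_of_hasCompactSupport hφc.mul_right)
    (hφ.aestronglyMeasurable.smul
      ((measurable_fderiv ℝ v).comp (measurable_const_sub p)).aestronglyMeasurable)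
    (.of_forall fun t => LipschitzOnWith.of_dist_le_mul fun x _ y _ => ?_)
    ((hφ.integrable_of_hasCompactSupport hφc).norm.mul_const _) ?_).2
  · rw [Real.coe_nnabs, abs_of_nonneg (by positivity), Real.dist_eq, ← mul_sub, abs_mul, mul_assoc,
      ← Real.norm_eq_abs, ← Real.dist_eq]
    gcongr
    simpa [dist_eq_norm] using hv.dist_le_mul (x - t) (y - t)
  · filter_upwards [hdiff] with t ht
    simpa using (ht.comp p ((hasFDerivAt_id p).sub_const t)).const_mul (φ t)

lemma locallyIntegrable_smul_fderiv {D : ℝ≥0} {u v : E → ℝ} (hu : Continuous u)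
    (hv : LipschitzWith D v) : LocallyIntegrable (fun y => u y • fderiv ℝ v y) μ :=
  (locallyIntegrable_fderiv hv).continuous_smul hu

variable {C D : ℝ≥0} {u v : E → ℝ} (b : ContDiffBump (0 : E))

lemma norm_convolution_smul_fderiv_sub_le (hu : LipschitzWith C u) (hv : LipschitzWith D v)
    (y p : E) :
    ‖(b.normed μ ⋆[lsmul ℝ ℝ, μ] fun x => u x • fderiv ℝ v x) p -
        u y • (b.normed μ ⋆[lsmul ℝ ℝ, μ] fderiv ℝ v) p‖ ≤ C * D * (dist p y + b.rOut) := by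
  have hex : ∀ g : E → ℝ, Continuous g →
      ConvolutionExistsAt (b.normed μ) (fun x => g x • fderiv ℝ v x) p (lsmul ℝ ℝ) μ := fun g hg =>
    b.hasCompactSupport_normed.convolutionExists_left _ b.continuous_normed
      (locallyIntegrable_smul_fderiv hg hv) p
  have hsub : (b.normed μ ⋆[lsmul ℝ ℝ, μ] fun x => (u x - u y) • fderiv ℝ v x) p =
      (b.normed μ ⋆[lsmul ℝ ℝ, μ] fun x => u x • fderiv ℝ v x) p -
        u y • (b.normed μ ⋆[lsmul ℝ ℝ, μ] fderiv ℝ v) p := by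
    have hadd := (hex (fun x => u x - u y) (hu.continuous.sub continuous_const)).distrib_add
      (hex (fun _ => u y) continuous_const)
    rw [eq_sub_iff_add_eq, ← Pi.smul_apply, ← convolution_smul]
    refine hadd.symm.trans ?_
    congr with x : 1
    simp only [Pi.add_apply, ← add_smul, sub_add_cancel]
  rw [← hsub, ← dist_zero_right]
  refine dist_convolution_le (mul_nonneg (by positivity) (add_nonneg dist_nonneg b.rOut_pos.le))
    b.support_normed_eq.subset b.nonneg_normed
    b.integral_normed (locallyIntegrable_smul_fderiv (hu.continuous.sub continuous_const)
      hv).aestronglyMeasurable fun x hx => ?_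
  rw [dist_zero_right, norm_smul]
  calc ‖u x - u y‖ * ‖fderiv ℝ v x‖ ≤ C * dist x y * D := by
        rw [← dist_eq_norm]
        gcongr
        exacts [hu.dist_le_mul x y, norm_fderiv_le_of_lipschitz ℝ hv]
    _ ≤ C * (dist p y + b.rOut) * D := by
        gcongr
        linarith [dist_triangle x p y, mem_ball.1 hx]
    _ = C * D * (dist p y + b.rOut) := by ring

lemma exists_primitive_mollified (hu : LipschitzWith C u) (hv : LipschitzWith D v) {c : E} {r : ℝ}
    (hclosed : WeaklyClosedOn μ (fun x => u x • fderiv ℝ v x) (ball c (r + b.rOut))) :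
    ∃ W : E → ℝ, ∀ y ∈ ball c r, ∀ z ∈ ball c r, |W z - W y - u y * (v z - v y)| ≤
      C * D * (dist z y + b.rOut) * dist z y + |u y| * (2 * (D * b.rOut)) := by
  obtain ⟨W, hW⟩ := exists_hasFDerivAt_convolution (b.contDiff_normed (μ := μ))
    b.hasCompactSupport_normed (locallyIntegrable_smul_fderiv hu.continuous hv)
    b.support_normed_eq.subset hclosed
  refine ⟨W, fun y hy z hz => ?_⟩
  set V : E → ℝ := b.normed μ ⋆[lsmul ℝ ℝ, μ] v
  have hVv : ∀ x, |V x - v x| ≤ D * b.rOut := fun x =>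
    b.dist_normed_convolution_le (μ := μ) hv.continuous.aestronglyMeasurable fun z hz =>
      (hv.dist_le_mul z x).trans (by gcongr; exact (mem_ball.1 hz).le)
  have hmean : ‖(W z - u y * V z) - (W y - u y * V y)‖ ≤
      C * D * (dist z y + b.rOut) * dist z y := by
    have hsegment := (convex_ball c r).segment_subset hy hz
    rw [dist_eq_norm]
    refine Convex.norm_image_sub_le_of_norm_hasFDerivWithin_le
      (fun p hp => ((hW p (hsegment hp)).sub ((hasFDerivAt_convolution_of_lipschitzWith (μ := μ)
        b.continuous_normed b.hasCompactSupport_normed hv p).const_mul (u y))).hasFDerivWithinAt)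
      (fun p hp => ?_)
      (convex_segment y z) (left_mem_segment ℝ y z) (right_mem_segment ℝ y z)
    refine (norm_convolution_smul_fderiv_sub_le b hu hv y p).trans ?_
    gcongr
    rw [dist_eq_norm]
    exact norm_sub_le_of_mem_segment hp
  calc |W z - W y - u y * (v z - v y)|
      = |((W z - u y * V z) - (W y - u y * V y)) +
          u y * ((V z - v z) - (V y - v y))| := by ring_nf
    _ ≤ _ := (abs_add_le _ _).trans (add_le_add hmean ?_)
  rw [abs_mul]
  gcongr
  exact (abs_sub _ _).trans (by linarith [hVv z, hVv y])

end Mollification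

section LocalPrimitive

open Filter Asymptotics

lemma exists_tendsto_of_ultrafilter {ι X : Type*} (l : Ultrafilter ι) {w : ι → X → ℝ} {s : Set X}
    (hw : ∀ x ∈ s, ∃ M, ∀ k, |w k x| ≤ M) :
    ∃ W : X → ℝ, ∀ x ∈ s, Tendsto (fun k => w k x) l (𝓝 (W x)) := by
  have hlim : ∀ x ∈ s, ∃ L, Tendsto (fun k => w k x) l (𝓝 L) := by
    intro x hx
    obtain ⟨M, hM⟩ := hw x hx
    have hle : Tendsto (fun k => w k x) l (𝓟 (Icc (-M) M)) :=
      tendsto_principal.2 (.of_forall fun k => abs_le.1 (hM k))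
    obtain ⟨L, -, hL⟩ := isCompact_Icc.ultrafilter_le_nhds (l.map fun k => w k x) hle
    exact ⟨L, hL⟩
  choose! W hW using hlim
  exact ⟨W, hW⟩

lemma exists_hasCompactSupport_eqOn_ball {X : Type*} [PseudoMetricSpace X] [ProperSpace X]
    {K : ℝ≥0} {u : X → ℝ} {c : X} {r : ℝ} (hu : LipschitzOnWith K u (ball c r)) :
    ∃ (L : ℝ≥0) (g : X → ℝ), LipschitzWith L g ∧ HasCompactSupport g ∧ EqOn u g (ball c r) := by
  obtain ⟨g, hg, hug⟩ := hu.extend_real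
  let A := |g c| + K * r + r
  let h : X → ℝ := fun x => max 0 (A - dist x c)
  have hh : LipschitzWith 1 h := by
    simpa using ((LipschitzWith.const A).sub (LipschitzWith.dist_left c)).const_max 0
  refine ⟨_, fun x => max (-h x) (min (g x) (h x)), hh.neg.max (hg.min hh), ?_, fun x hx => ?_⟩
  · refine HasCompactSupport.intro (isCompact_closedBall c A) fun x hx => ?_
    have h0 : h x = 0 := max_eq_left (by linarith [not_le.1 (mem_closedBall.not.1 hx)])
    simp [h0]
  · have hdist : dist x c < r := hx
    have hgx : |g x| ≤ h x := by
      refine le_max_of_le_right ?_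
      have hgc : |g x - g c| ≤ K * r :=
        (hg.dist_le_mul x c).trans (by gcongr)
      simp only [A]
      linarith [abs_sub_abs_le_abs_sub (g x) (g c)]
    rw [abs_le] at hgx
    simp only [hug hx, min_eq_left hgx.2, max_eq_right hgx.1]

variable {E : Type*} [NormedAddCommGroup E]

/-- `w` is a primitive of the `1`-form `u dv` on `s`, in the sense that the increments of `w` agree
with those of `v` multiplied by `u` up to a quadratic error. -/
def IsPrimitiveOn (u v w : E → ℝ) (s : Set E) : Prop :=
  ∀ x ∈ s, (fun z => w z - w x - u x * (v z - v x)) =O[𝓝 x] fun z => ‖z - x‖ ^ 2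

lemma IsPrimitiveOn.congr {u v w u' v' w' : E → ℝ} {s : Set E} (h : IsPrimitiveOn u v w s)
    (hs : IsOpen s) (hu : EqOn u u' s) (hv : EqOn v v' s) (hw : EqOn w w' s) :
    IsPrimitiveOn u' v' w' s := by
  intro x hx
  refine (h x hx).congr' ?_ .rfl
  filter_upwards [hs.mem_nhds hx] with z hz
  rw [hw hz, hw hx, hu hx, hv hz, hv hx]

variable [NormedSpace ℝ E] [FiniteDimensional ℝ E] [MeasurableSpace E] [BorelSpace E]
  {μ : Measure E} [μ.IsAddHaarMeasure]

lemma exists_quadratic_primitive_of_weaklyClosedOn {C D : ℝ≥0} {u v : E → ℝ}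
    (hu : LipschitzWith C u) (hv : LipschitzWith D v) {c : E} {r : ℝ} (hr : 0 < r)
    (hclosed : WeaklyClosedOn μ (fun x => u x • fderiv ℝ v x) (ball c (2 * r))) :
    ∃ W : E → ℝ, ∀ y ∈ ball c r, ∀ z ∈ ball c r,
      |W z - W y - u y * (v z - v y)| ≤ C * D * dist z y ^ 2 := by
  let δ : ℕ → ℝ := fun k => r / (k + 1)
  have hδ0 : ∀ k, 0 < δ k := fun k => by positivity
  have hδr : ∀ k, δ k ≤ r := fun k => div_le_self hr.le (by simp)
  have hδlim : Tendsto δ (hyperfilter ℕ) (𝓝 0) :=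
    (by simpa [δ, div_eq_mul_inv] using tendsto_one_div_add_atTop_nhds_zero_nat.const_mul r :
      Tendsto δ atTop (𝓝 0)).mono_left Nat.hyperfilter_le_atTop
  have happrox : ∀ k, ∃ W : E → ℝ, ∀ y ∈ ball c r, ∀ z ∈ ball c r,
      |W z - W y - u y * (v z - v y)| ≤
        C * D * (dist z y + δ k) * dist z y + |u y| * (2 * (D * δ k)) := by
    intro k
    refine exists_primitive_mollified (μ := μ) ⟨δ k / 2, δ k, half_pos (hδ0 k),
      half_lt_self (hδ0 k)⟩ hu hv fun ψ hψ hψc hψs => hclosed ψ hψ hψc (hψs.trans ?_)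
    exact ball_subset_ball (by linarith [hδr k])
  choose w hw using happrox
  obtain ⟨W, hW⟩ : ∃ W : E → ℝ, ∀ x ∈ ball c r,
      Tendsto (fun k => w k x - w k c) (hyperfilter ℕ) (𝓝 (W x)) := by
    refine exists_tendsto_of_ultrafilter _ fun x hx =>
      ⟨C * D * (dist x c + r) * dist x c + |u c| * (2 * (D * r)) + |u c * (v x - v c)|, fun k => ?_⟩
    have hsum := abs_add_le (w k x - w k c - u c * (v x - v c)) (u c * (v x - v c))
    rw [sub_add_cancel] at hsum
    refine hsum.trans (add_le_add_left ((hw k c (mem_ball_self hr) x hx).trans ?_) _)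
    gcongr <;> exact hδr k
  refine ⟨W, fun y hy z hz => ?_⟩
  have hleft : Tendsto (fun k => |w k z - w k y - u y * (v z - v y)|) (hyperfilter ℕ)
      (𝓝 |W z - W y - u y * (v z - v y)|) := by
    simpa using (((hW z hz).sub (hW y hy)).sub_const (u y * (v z - v y))).abs
  have hright : Tendsto
      (fun k => C * D * (dist z y + δ k) * dist z y + |u y| * (2 * (D * δ k))) (hyperfilter ℕ)
      (𝓝 (C * D * (dist z y + 0) * dist z y + |u y| * (2 * (D * 0)))) :=
    (((hδlim.const_add _).const_mul _).mul_const _).add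
      (((hδlim.const_mul _).const_mul _).const_mul _)
  refine (le_of_tendsto_of_tendsto' hleft hright fun k => hw k y hy z hz).trans_eq ?_
  ring

lemma exists_isPrimitiveOn_ball {u v : E → ℝ} {Ω : Set E} (hu : LocLipOn u Ω) (hv : LocLipOn v Ω)
    (hwedge : ∀ᵐ x ∂μ, x ∈ Ω → WedgeEqZero (fderiv ℝ u x) (fderiv ℝ v x)) {x : E} (hx : x ∈ Ω) :
    ∃ r > 0, ∃ w, IsPrimitiveOn u v w (ball x r) := by
  obtain ⟨r₁, hr₁, hΩ, C, hC⟩ := hu x hx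
  obtain ⟨r₂, hr₂, -, D, hD⟩ := hv x hx
  obtain ⟨r, hr, hrr₁, hrr₂⟩ : ∃ r > 0, 2 * r ≤ r₁ ∧ 2 * r ≤ r₂ :=
    ⟨min r₁ r₂ / 2, by positivity, by linarith [min_le_left r₁ r₂],
      by linarith [min_le_right r₁ r₂]⟩
  obtain ⟨C', u', hu', huc', huu'⟩ :=
    exists_hasCompactSupport_eqOn_ball (hC.mono (ball_subset_ball hrr₁))
  obtain ⟨D', v', hv', hvc', hvv'⟩ :=
    exists_hasCompactSupport_eqOn_ball (hD.mono (ball_subset_ball hrr₂))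
  have hclosed : WeaklyClosedOn μ (fun x => u' x • fderiv ℝ v' x) (ball x (2 * r)) := by
    refine weaklyClosedOn_smul_fderiv hu' huc' hv' hvc' ?_
    filter_upwards [hwedge] with y hy hyx
    rw [← (huu'.eventuallyEq_of_mem (isOpen_ball.mem_nhds hyx)).fderiv_eq,
      ← (hvv'.eventuallyEq_of_mem (isOpen_ball.mem_nhds hyx)).fderiv_eq]
    exact hy (hΩ (ball_subset_ball hrr₁ hyx))
  obtain ⟨w, hw⟩ := exists_quadratic_primitive_of_weaklyClosedOn hu' hv' hr hclosed
  have hball : ball x r ⊆ ball x (2 * r) := ball_subset_ball (by linarith)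
  have hprim : IsPrimitiveOn u' v' w (ball x r) := fun y hy => by
    refine IsBigO.of_bound (C' * D') ?_
    filter_upwards [isOpen_ball.mem_nhds hy] with z hz
    simpa [dist_eq_norm] using hw y hy z hz
  exact ⟨r, hr, w, hprim.congr isOpen_ball (huu'.symm.mono hball) (hvv'.symm.mono hball)
    fun _ _ => rfl⟩

end LocalPrimitive

section LocLip

variable {E X : Type*} [NormedAddCommGroup E] [NormedSpace ℝ E] {Ω : Set E}

lemma LocLipOn.isOpen [PseudoMetricSpace X] {f : E → X} (hf : LocLipOn f Ω) : IsOpen Ω :=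
  isOpen_iff.2 fun x hx => let ⟨r, hr, hball, _⟩ := hf x hx; ⟨r, hr, hball⟩

lemma LocLipOn.continuousOn [PseudoMetricSpace X] {f : E → X} (hf : LocLipOn f Ω) :
    ContinuousOn f Ω := fun x hx =>
  let ⟨_, hr, _, _, hK⟩ := hf x hx
  (hK.continuousOn.continuousAt (ball_mem_nhds x hr)).continuousWithinAt

lemma ae_imp_of_forall_exists_ball {X : Type*} [PseudoMetricSpace X] [SecondCountableTopology X]
    [MeasurableSpace X] {μ : Measure X} {s : Set X} {P : X → Prop}
    (h : ∀ x ∈ s, ∃ r > 0, ∀ᵐ y ∂μ, y ∈ ball x r → P y) : ∀ᵐ y ∂μ, y ∈ s → P y := by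
  rw [ae_iff]
  refine measure_null_of_locally_null _ fun x hx => ?_
  obtain ⟨r, hr, hae⟩ := h x (Classical.not_imp.1 hx).1
  refine ⟨_, inter_mem_nhdsWithin _ (ball_mem_nhds x hr), measure_mono_null ?_ (ae_iff.1 hae)⟩
  rintro y ⟨hys, hy⟩
  exact Classical.not_imp.2 ⟨hy, (Classical.not_imp.1 hys).2⟩

lemma LocLipOn.ae_differentiableAt {V : Type*} [NormedAddCommGroup V] [NormedSpace ℝ V]
    [FiniteDimensional ℝ V] [FiniteDimensional ℝ E] [MeasurableSpace E] [BorelSpace E]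
    {μ : Measure E} [μ.IsAddHaarMeasure] {f : E → V} (hf : LocLipOn f Ω) :
    ∀ᵐ x ∂μ, x ∈ Ω → DifferentiableAt ℝ f x := by
  refine ae_imp_of_forall_exists_ball fun x hx => ?_
  obtain ⟨r, hr, -, K, hK⟩ := hf x hx
  refine ⟨r, hr, ?_⟩
  filter_upwards [hK.ae_differentiableWithinAt_of_mem (μ := μ)] with y hy hyx
  exact (hy hyx).differentiableAt (isOpen_ball.mem_nhds hyx)

end LocLip

section Gluing

open Asymptotics

lemma continuousAt_iff_eventually_eq_of_discrete {X Y : Type*} [TopologicalSpace X]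
    [TopologicalSpace Y] [DiscreteTopology Y] {f : X → Y} {x : X} :
    ContinuousAt f x ↔ ∀ᶠ y in 𝓝 x, f y = f x := by
  rw [ContinuousAt, nhds_discrete Y, Filter.tendsto_pure]

/-- The covering space associated with a family of functions `W i : X → G`, defined on the sets
`B i` of an open cover, whose differences are locally constant. It is encoded as a fibre bundle
with discrete fibre `G`, in which a section that is locally constant in every chart represents a
function which differs from each `W i` by a locally constant one. -/
def differenceBundleCore {ι X G : Type*} [TopologicalSpace X] [AddCommGroup G]
    [TopologicalSpace G] [DiscreteTopology G] (B : ι → Set X) (hB : ∀ i, IsOpen (B i))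
    (c : X → ι) (hc : ∀ x, x ∈ B (c x)) (W : ι → X → G)
    (hW : ∀ i j, ∀ x ∈ B i ∩ B j, ∀ᶠ y in 𝓝 x, W i y - W j y = W i x - W j x) :
    FiberBundleCore ι X G where
  baseSet := B
  isOpen_baseSet := hB
  indexAt := c
  mem_baseSet_at := hc
  coordChange i j x g := g + (W i x - W j x)
  coordChange_self i x _ g := by simp
  continuousOn_coordChange i j p hp := by
    refine ContinuousAt.continuousWithinAt (continuousAt_iff_eventually_eq_of_discrete.2 ?_)
    filter_upwards [continuousAt_fst.eventually (hW i j p.1 hp.1),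
      continuousAt_iff_eventually_eq_of_discrete.1 continuousAt_snd] with q hq₁ hq₂
    rw [hq₁, hq₂]
  coordChange_comp i j k x _ g := by abel

lemma exists_sub_eventually_const_of_cover {ι X G : Type*} [TopologicalSpace X]
    [SimplyConnectedSpace X] [LocallyPathConnectedSpace X] [AddCommGroup G]
    {B : ι → Set X} (hB : ∀ i, IsOpen (B i)) (hcover : ∀ x, ∃ i, x ∈ B i) {W : ι → X → G}
    (hW : ∀ i j, ∀ x ∈ B i ∩ B j, ∀ᶠ y in 𝓝 x, W i y - W j y = W i x - W j x) :
    ∃ w : X → G, ∀ i, ∀ x ∈ B i, ∀ᶠ y in 𝓝 x, w y - W i y = w x - W i x := by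
  let _ : TopologicalSpace G := ⊥
  have _ : DiscreteTopology G := ⟨rfl⟩
  choose c hc using hcover
  let Z := differenceBundleCore B hB c hc W hW
  have hcov : IsCoveringMap (Bundle.TotalSpace.proj : Bundle.TotalSpace G Z.Fiber → X) :=
    FiberBundle.isCoveringMap
  obtain ⟨x₀⟩ : Nonempty X := inferInstance
  obtain ⟨s, ⟨-, hs⟩, -⟩ := hcov.existsUnique_continuousMap_lifts (ContinuousMap.id X) x₀
    (⟨x₀, (0 : G)⟩ : Bundle.TotalSpace G Z.Fiber) rfl
  have hproj : ∀ x, (s x).1 = x := fun x => congrFun hs x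
  let σ : X → G := fun x => (s x).2
  refine ⟨fun x => σ x + W (c x) x, fun i x hx => ?_⟩
  have hchart : ∀ y, σ y + W (c y) y - W i y = (Z.localTriv i (s y)).2 := fun y => by
    have hy : (Z.localTriv i (s y)).2 = σ y + (W (c (s y).1) (s y).1 - W i (s y).1) := rfl
    rw [hy, hproj, add_sub_assoc]
  have hcont : ContinuousAt (fun y => (Z.localTriv i (s y)).2) x :=
    continuousAt_snd.comp <| ContinuousAt.comp
      ((Z.localTriv i).toOpenPartialHomeomorph.continuousAt
        (show (s x).1 ∈ B i from (hproj x).symm ▸ hx)) s.continuous.continuousAt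
  filter_upwards [continuousAt_iff_eventually_eq_of_discrete.1 hcont] with y hy
  rw [hchart, hchart, hy]

lemma eq_of_isBigO_norm_sub_sq {E F : Type*} [NormedAddCommGroup E] [NormedSpace ℝ E]
    [NormedAddCommGroup F] [NormedSpace ℝ F] {s : Set E} (hs : IsOpen s) (hsc : IsPreconnected s)
    {g : E → F} (hg : ∀ x ∈ s, (fun z => g z - g x) =O[𝓝 x] fun z => ‖z - x‖ ^ 2) {x y : E}
    (hx : x ∈ s) (hy : y ∈ s) : g x = g y := by
  have hderiv : ∀ z ∈ s, HasFDerivAt g (0 : E →L[ℝ] F) z := fun z hz => by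
    simpa using ((hg z hz).hasFDerivAt one_lt_two).add_const (g z)
  exact hs.is_const_of_fderiv_eq_zero hsc
    (fun z hz => (hderiv z hz).differentiableAt.differentiableWithinAt)
    (fun z hz => (hderiv z hz).fderiv) hx hy

lemma IsPrimitiveOn.sub_eq_sub {E : Type*} [NormedAddCommGroup E] [NormedSpace ℝ E]
    {u v w₁ w₂ : E → ℝ} {s : Set E} (hs : IsOpen s) (hsc : IsPreconnected s)
    (h₁ : IsPrimitiveOn u v w₁ s) (h₂ : IsPrimitiveOn u v w₂ s) {x y : E} (hx : x ∈ s)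
    (hy : y ∈ s) : w₁ x - w₂ x = w₁ y - w₂ y := by
  refine eq_of_isBigO_norm_sub_sq (g := fun z => w₁ z - w₂ z) hs hsc (fun z hz => ?_) hx hy
  refine ((h₁ z hz).sub (h₂ z hz)).congr_left fun p => ?_
  ring

lemma exists_isPrimitiveOn_of_forall_ball {E : Type*} [NormedAddCommGroup E] [NormedSpace ℝ E]
    {Ω : Set E} (hΩ : IsOpen Ω) (hΩsc : SimplyConnectedSpace Ω) {u v : E → ℝ}
    (hlocal : ∀ x ∈ Ω, ∃ r > 0, ∃ w, IsPrimitiveOn u v w (ball x r)) :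
    ∃ w, IsPrimitiveOn u v w Ω := by
  choose r hr W hW using fun x : Ω => hlocal x x.2
  have : LocallyPathConnectedSpace Ω := hΩ.locallyPathConnectedSpace
  let B : Ω → Set Ω := fun i => (↑) ⁻¹' ball (i : E) (r i)
  have hB : ∀ i, IsOpen (B i) := fun i => isOpen_ball.preimage continuous_subtype_val
  obtain ⟨w, hw⟩ := exists_sub_eventually_const_of_cover (W := fun i (y : Ω) => W i y) hB
    (fun x => ⟨x, mem_ball_self (hr x)⟩) (by
      rintro i j x ⟨hxi, hxj⟩
      filter_upwards [(hB i).mem_nhds hxi, (hB j).mem_nhds hxj] with y hyi hyj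
      exact IsPrimitiveOn.sub_eq_sub (isOpen_ball.inter isOpen_ball)
        ((convex_ball _ _).inter (convex_ball _ _)).isPreconnected
        (fun z hz => hW i z hz.1) (fun z hz => hW j z hz.2) ⟨hyi, hyj⟩ ⟨hxi, hxj⟩)
  refine ⟨Function.extend (↑) w 0, fun x hx => ?_⟩
  lift x to Ω using hx
  refine (hW x x (mem_ball_self (hr x))).congr' ?_ .rfl
  rw [← hΩ.isOpenEmbedding_subtypeVal.map_nhds_eq x]
  refine Filter.eventually_map.2 ?_
  filter_upwards [hw x x (mem_ball_self (hr x))] with y hy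
  rw [Subtype.val_injective.extend_apply, Subtype.val_injective.extend_apply]
  linarith

lemma exists_isPrimitiveOn {E : Type*} [NormedAddCommGroup E] [NormedSpace ℝ E]
    [FiniteDimensional ℝ E] [MeasurableSpace E] [BorelSpace E] {μ : Measure E}
    [μ.IsAddHaarMeasure] {Ω : Set E} (hΩsc : SimplyConnectedSpace Ω)
    {u v : E → ℝ} (hu : LocLipOn u Ω) (hv : LocLipOn v Ω)
    (hwedge : ∀ᵐ x ∂μ, x ∈ Ω → WedgeEqZero (fderiv ℝ u x) (fderiv ℝ v x)) :
    ∃ w, IsPrimitiveOn u v w Ω :=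
  exists_isPrimitiveOn_of_forall_ball hu.isOpen hΩsc fun _ =>
    exists_isPrimitiveOn_ball hu hv hwedge

end Gluing

section SegLength

variable {E V : Type*} [NormedAddCommGroup E] [NormedSpace ℝ E] [NormedAddCommGroup V]
  [NormedSpace ℝ V] {f : E → V} {s : Set E} {x z : E}

lemma deriv_add_smul_eq_lineDeriv (f : E → V) (y ξ : E) (t : ℝ) :
    deriv (fun τ : ℝ => f (y + τ • ξ)) t = lineDeriv ℝ f (y + t • ξ) ξ := by
  have h := deriv_comp_const_add (f := fun τ : ℝ => f (y + τ • ξ)) t 0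
  rw [add_zero] at h
  simp only [lineDeriv, ← h, add_smul, add_assoc]

/-- The length of the image under `f` of the segment from `x` to `z`, computed as the integral of
the speed. -/
noncomputable def segLength (f : E → V) (x z : E) : ℝ :=
  ∫ t in (0 : ℝ)..1, ‖lineDeriv ℝ f (x + t • (z - x)) (z - x)‖

lemma segLength_nonneg (f : E → V) (x z : E) : 0 ≤ segLength f x z :=
  intervalIntegral.integral_nonneg zero_le_one fun _ _ => norm_nonneg _

lemma segLength_add_smul (f : E → V) (y ξ : E) {a b : ℝ} (hab : a ≤ b) :
    segLength f (y + a • ξ) (y + b • ξ) = ∫ t in a..b, ‖lineDeriv ℝ f (y + t • ξ) ξ‖ := by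
  have hsub : y + b • ξ - (y + a • ξ) = (b - a) • ξ := by rw [sub_smul]; abel
  have hadd : ∀ t : ℝ, y + a • ξ + t • (b - a) • ξ = y + (a + (b - a) * t) • ξ := fun t => by
    rw [add_smul, mul_comm, mul_smul, add_assoc]
  simp only [segLength, hsub, hadd, lineDeriv_smul, norm_smul,
    Real.norm_of_nonneg (sub_nonneg.2 hab), intervalIntegral.integral_const_mul]
  simpa using intervalIntegral.smul_integral_comp_add_mul (a := 0) (b := 1)
    (fun t => ‖lineDeriv ℝ f (y + t • ξ) ξ‖) (b - a) a

lemma segLength_le {K : ℝ≥0} (hs : IsOpen s) (hf : LipschitzOnWith K f s)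
    (hseg : segment ℝ x z ⊆ s) : segLength f x z ≤ K * ‖z - x‖ := by
  have hbound := intervalIntegral.norm_integral_le_of_norm_le_const (a := 0) (b := 1)
    (f := fun t : ℝ => ‖lineDeriv ℝ f (x + t • (z - x)) (z - x)‖) (C := K * ‖z - x‖) fun t ht => by
      rw [uIoc_of_le zero_le_one] at ht
      rw [norm_norm]
      refine norm_lineDeriv_le_of_lipschitzOn ℝ (hs.mem_nhds (hseg ?_)) hf
      rw [segment_eq_image']
      exact mem_image_of_mem _ (Ioc_subset_Icc_self ht)
  simpa [segLength] using (le_abs_self _).trans hbound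

lemma stronglyMeasurable_norm_lineDeriv [CompleteSpace V] (f : E → V) (y ξ : E) :
    StronglyMeasurable fun t : ℝ => ‖lineDeriv ℝ f (y + t • ξ) ξ‖ := by
  simpa only [deriv_add_smul_eq_lineDeriv] using
    (stronglyMeasurable_deriv fun t : ℝ => f (y + t • ξ)).norm

lemma LocLipOn.intervalIntegrable_norm_lineDeriv [CompleteSpace V] (hf : LocLipOn f s)
    (hseg : segment ℝ x z ⊆ s) :
    IntervalIntegrable (fun t => ‖lineDeriv ℝ f (x + t • (z - x)) (z - x)‖) volume 0 1 := by
  rw [segment_eq_image', image_subset_iff] at hseg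
  rw [intervalIntegrable_iff_integrableOn_Icc_of_le zero_le_one]
  refine LocallyIntegrableOn.integrableOn_isCompact (fun t ht => ?_) isCompact_Icc
  obtain ⟨r, hr, -, K, hK⟩ := hf _ (hseg ht)
  refine (volume.finiteAt_nhdsWithin t _).integrableAtFilter
    (stronglyMeasurable_norm_lineDeriv f x (z - x)).stronglyMeasurableAtFilter
    (Filter.isBoundedUnder_of_eventually_le (a := K * ‖z - x‖) ?_)
  have hline : Continuous fun τ : ℝ => x + τ • (z - x) := by fun_prop
  filter_upwards [mem_nhdsWithin_of_mem_nhds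
    ((isOpen_ball.preimage hline).mem_nhds (mem_ball_self hr))] with τ hτ
  simpa using norm_lineDeriv_le_of_lipschitzOn ℝ (isOpen_ball.mem_nhds hτ) hK (v := z - x)

lemma abs_clm_comp_sub_le_segLength [FiniteDimensional ℝ V] {K : ℝ≥0} (hs : IsOpen s)
    (hf : LipschitzOnWith K f s) (hseg : segment ℝ x z ⊆ s) {ℓ : V →L[ℝ] ℝ} (hℓ : ‖ℓ‖ ≤ 1) :
    |ℓ (f z) - ℓ (f x)| ≤ segLength f x z := by
  have : CompleteSpace V := FiniteDimensional.complete ℝ V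
  have hline : LipschitzWith _ fun t : ℝ => x + t • (z - x) :=
    (LipschitzWith.const x).add (ContinuousLinearMap.toSpanSingleton ℝ (z - x)).lipschitz
  let T : Set ℝ := {t | x + t • (z - x) ∈ s}
  have hT : IsOpen T := hs.preimage hline.continuous
  have hIT : uIcc 0 1 ⊆ T := by
    rwa [segment_eq_image', image_subset_iff, ← uIcc_of_le (zero_le_one' ℝ)] at hseg
  have hfT : LipschitzOnWith _ (fun t : ℝ => f (x + t • (z - x))) T :=
    hf.comp hline.lipschitzOnWith fun _ ht => ht
  have hFTC := ((ℓ.lipschitz.comp_lipschitzOnWith hfT).mono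
    hIT).absolutelyContinuousOnInterval.integral_deriv_eq_sub
  simp only [Function.comp_def, one_smul, add_sub_cancel, zero_smul, add_zero] at hFTC
  rw [← hFTC, ← Real.norm_eq_abs]
  refine intervalIntegral.norm_integral_le_of_norm_le zero_le_one ?_
    (LocLipOn.intervalIntegrable_norm_lineDeriv (s := s) ?_ hseg)
  · filter_upwards [hfT.ae_differentiableWithinAt_of_mem] with t ht htI
    have htT : t ∈ T := hIT (uIoc_subset_uIcc (by rwa [uIoc_of_le zero_le_one]))
    have hderiv := ((ht htT).differentiableAt (hT.mem_nhds htT)).hasDerivAt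
    have hcomp : deriv (fun τ : ℝ => ℓ (f (x + τ • (z - x)))) t =
        ℓ (deriv (fun τ : ℝ => f (x + τ • (z - x))) t) :=
      (ℓ.hasFDerivAt.comp_hasDerivAt t hderiv).deriv
    rw [hcomp, deriv_add_smul_eq_lineDeriv]
    exact (ℓ.le_of_opNorm_le hℓ _).trans_eq (one_mul _)
  · intro y hy
    obtain ⟨r, hr, hball⟩ := isOpen_iff.1 hs y hy
    exact ⟨r, hr, hball, K, hf.mono hball⟩

end SegLength

section Dominated

variable {E V : Type*} [NormedAddCommGroup E] [NormedSpace ℝ E] [NormedAddCommGroup V]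
  [NormedSpace ℝ V] {f : E → V} {g : E → ℝ} {Ω : Set E}

/-- `g` is dominated by `f` on `Ω` if along every segment in `Ω` it varies by at most the length
of the image of the segment under `f`. -/
def Dominated (f : E → V) (Ω : Set E) (g : E → ℝ) : Prop :=
  ∀ x z, segment ℝ x z ⊆ Ω → |g z - g x| ≤ segLength f x z

lemma Dominated.lipschitzWith_one_comp {φ : ℝ → ℝ} (hg : Dominated f Ω g)
    (hφ : LipschitzWith 1 φ) : Dominated f Ω fun x => φ (g x) := fun x z hseg => by
  refine le_trans ?_ (hg x z hseg)
  simpa [Real.dist_eq] using hφ.dist_le_mul (g z) (g x)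

lemma Dominated.mono {s : Set E} (hg : Dominated f Ω g) (hs : s ⊆ Ω) : Dominated f s g :=
  fun x z hseg => hg x z (hseg.trans hs)

lemma Dominated.lipschitzOnWith {K : ℝ≥0} {s : Set E} (hg : Dominated f Ω g) (hs : IsOpen s)
    (hconv : Convex ℝ s) (hsΩ : s ⊆ Ω) (hf : LipschitzOnWith K f s) : LipschitzOnWith K g s := by
  refine LipschitzOnWith.of_dist_le_mul fun z hz x hx => ?_
  have hseg : segment ℝ x z ⊆ s := hconv.segment_subset hx hz
  rw [Real.dist_eq, dist_eq_norm]
  exact (hg x z (hseg.trans hsΩ)).trans (segLength_le hs hf hseg)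

lemma Dominated.locLipOn (hg : Dominated f Ω g) (hf : LocLipOn f Ω) : LocLipOn g Ω := fun x hx =>
  let ⟨r, hr, hball, K, hK⟩ := hf x hx
  ⟨r, hr, hball, K, hg.lipschitzOnWith isOpen_ball (convex_ball x r) hball hK⟩

lemma le_of_forall_eventually_sub_le_sq {F : ℝ → ℝ} {a b : ℝ} (hab : a ≤ b)
    (hF : ContinuousOn F (Icc a b))
    (h : ∀ t ∈ Ico a b, ∃ C : ℝ, ∀ᶠ s in 𝓝[>] t, F s - F t ≤ C * (s - t) ^ 2) : F b ≤ F a := by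
  refine image_le_of_liminf_slope_right_le_deriv_boundary hF (B := fun _ => F a) (B' := 0) le_rfl
    continuousOn_const (fun t _ => hasDerivWithinAt_const t _ _) (fun t ht r hr => ?_)
    (right_mem_Icc.2 hab)
  obtain ⟨C, hC⟩ := h t ht
  have hsmall : ∀ᶠ s in 𝓝[>] t, C * (s - t) < r := by
    have hcont : Continuous fun s => C * (s - t) := by fun_prop
    refine (hcont.tendsto t).mono_left nhdsWithin_le_nhds |>.eventually_lt_const ?_
    simpa using hr
  refine Filter.Eventually.frequently ?_
  filter_upwards [hC, hsmall, self_mem_nhdsWithin] with s hs hsr hts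
  have hpos : 0 < s - t := sub_pos.2 hts
  rw [slope_def_field, div_lt_iff₀ hpos]
  nlinarith

lemma abs_sub_le_of_forall_eventually_sq {G Φ : ℝ → ℝ} {a b : ℝ} (hab : a ≤ b)
    (hG : ContinuousOn G (Icc a b)) (hΦ : ContinuousOn Φ (Icc a b))
    (h : ∀ t ∈ Ico a b, ∃ C : ℝ, ∀ᶠ s in 𝓝[>] t, |G s - G t| ≤ Φ s - Φ t + C * (s - t) ^ 2) :
    |G b - G a| ≤ Φ b - Φ a := by
  have hmono : ∀ σ : ℝ, |σ| = 1 → σ * G b - Φ b ≤ σ * G a - Φ a := fun σ hσ => by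
    refine le_of_forall_eventually_sub_le_sq (F := fun t => σ * G t - Φ t) hab
      ((hG.const_mul σ).sub hΦ) fun t ht => ?_
    obtain ⟨C, hC⟩ := h t ht
    refine ⟨C, hC.mono fun s hs => ?_⟩
    have hle := le_abs_self (σ * (G s - G t))
    rw [abs_mul, hσ, one_mul] at hle
    linarith
  rw [abs_le]
  constructor <;> linarith [hmono 1 (by simp), hmono (-1) (by simp)]

lemma dominated_of_eventually_abs_sub_le [CompleteSpace V] (hf : LocLipOn f Ω)
    (hg : ContinuousOn g Ω)
    (h : ∀ x ∈ Ω, ∃ C : ℝ, ∀ᶠ z in 𝓝 x, |g z - g x| ≤ segLength f x z + C * ‖z - x‖ ^ 2) :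
    Dominated f Ω g := by
  intro x z hseg
  let γ : ℝ → E := fun t => x + t • (z - x)
  have hγ : Continuous γ := by fun_prop
  have hγΩ : MapsTo γ (Icc 0 1) Ω := by rwa [segment_eq_image', image_subset_iff] at hseg
  let Φ : ℝ → ℝ := fun t => ∫ τ in (0 : ℝ)..t, ‖lineDeriv ℝ f (γ τ) (z - x)‖
  have hint := hf.intervalIntegrable_norm_lineDeriv hseg
  have hint' : ∀ t ∈ Icc (0 : ℝ) 1,
      IntervalIntegrable (fun τ => ‖lineDeriv ℝ f (γ τ) (z - x)‖) volume 0 t := fun t ht =>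
    hint.mono_set (uIcc_subset_uIcc_left (by rwa [uIcc_of_le zero_le_one]))
  have hΦ : ContinuousOn Φ (Icc 0 1) := by
    rw [← uIcc_of_le zero_le_one]
    exact intervalIntegral.continuousOn_primitive_interval' hint left_mem_uIcc
  have hlocal : ∀ t ∈ Ico (0 : ℝ) 1, ∃ C : ℝ, ∀ᶠ s in 𝓝[>] t,
      |g (γ s) - g (γ t)| ≤ Φ s - Φ t + C * (s - t) ^ 2 := by
    intro t ht
    obtain ⟨C, hC⟩ := h (γ t) (hγΩ (Ico_subset_Icc_self ht))
    refine ⟨C * ‖z - x‖ ^ 2, ?_⟩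
    filter_upwards [(hγ.tendsto t).mono_left nhdsWithin_le_nhds |>.eventually hC,
      Ioc_mem_nhdsGT ht.2] with s hs hts
    rw [segLength_add_smul f x (z - x) hts.1.le, ← intervalIntegral.integral_interval_sub_left
      (hint' s ⟨ht.1.trans hts.1.le, hts.2⟩) (hint' t (Ico_subset_Icc_self ht))] at hs
    refine hs.trans_eq ?_
    simp only [γ, Φ, add_sub_add_left_eq_sub, ← sub_smul, norm_smul, Real.norm_eq_abs, mul_pow,
      sq_abs]
    ring
  simpa [Φ, γ, segLength] using abs_sub_le_of_forall_eventually_sq zero_le_one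
    (hg.comp hγ.continuousOn hγΩ) hΦ hlocal

lemma dominated_clm_comp [FiniteDimensional ℝ V] (hf : LocLipOn f Ω) {ℓ : V →L[ℝ] ℝ}
    (hℓ : ‖ℓ‖ ≤ 1) : Dominated f Ω fun x => ℓ (f x) := by
  have : CompleteSpace V := FiniteDimensional.complete ℝ V
  refine dominated_of_eventually_abs_sub_le hf (ℓ.continuous.comp_continuousOn hf.continuousOn)
    fun x hx => ⟨0, ?_⟩
  obtain ⟨r, hr, -, K, hK⟩ := hf x hx
  filter_upwards [ball_mem_nhds x hr] with z hz
  rw [zero_mul, add_zero]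
  exact abs_clm_comp_sub_le_segLength isOpen_ball hK
    ((convex_ball x r).segment_subset (mem_ball_self hr) hz) hℓ

lemma exists_forall_dominated_abs_sub_le (hΩ : IsPreconnected Ω) (hf : LocLipOn f Ω) {x y : E}
    (hx : x ∈ Ω) (hy : y ∈ Ω) : ∃ M, ∀ g, Dominated f Ω g → |g x - g y| ≤ M := by
  refine hΩ.induction₂ (fun x y => ∃ M, ∀ g, Dominated f Ω g → |g x - g y| ≤ M) ?_ ?_ ?_ hx hy
  · intro x hx
    obtain ⟨r, hr, hball, K, hK⟩ := hf x hx
    filter_upwards [mem_nhdsWithin_of_mem_nhds (ball_mem_nhds x hr)] with y hy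
    exact ⟨K * dist x y, fun g hg => (hg.lipschitzOnWith isOpen_ball (convex_ball x r) hball
      hK).dist_le_mul x (mem_ball_self hr) y hy⟩
  · rintro x y z - - - ⟨M, hM⟩ ⟨N, hN⟩
    exact ⟨M + N, fun g hg => (abs_sub_le _ (g y) _).trans (add_le_add (hM g hg) (hN g hg))⟩
  · rintro x y - - ⟨M, hM⟩
    exact ⟨M, fun g hg => abs_sub_comm (g x) (g y) ▸ hM g hg⟩

lemma exists_dominated_forall_sub_le (hΩ : IsPreconnected Ω) (hf : LocLipOn f Ω) {x₀ : E}
    (hx₀ : x₀ ∈ Ω) :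
    ∃ D, Dominated f Ω D ∧ D x₀ = 0 ∧ ∀ g, Dominated f Ω g → ∀ x ∈ Ω, g x - g x₀ ≤ D x := by
  let D : E → ℝ := fun x => ⨆ g : {g // Dominated f Ω g}, (g.1 x - g.1 x₀)
  have hzero : Dominated f Ω 0 := fun x z _ => by simpa using segLength_nonneg f x z
  have : Nonempty {g // Dominated f Ω g} := ⟨⟨0, hzero⟩⟩
  have hbdd : ∀ x ∈ Ω, BddAbove (range fun g : {g // Dominated f Ω g} => g.1 x - g.1 x₀) := by
    intro x hx
    obtain ⟨M, hM⟩ := exists_forall_dominated_abs_sub_le hΩ hf hx hx₀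
    exact ⟨M, forall_mem_range.2 fun g => (le_abs_self _).trans (hM g.1 g.2)⟩
  have hD : ∀ x ∈ Ω, ∀ z, ∀ L, (∀ g, Dominated f Ω g → |g z - g x| ≤ L) → D z ≤ L + D x := by
    intro x hx z L hL
    refine ciSup_le fun g => ?_
    linarith [le_ciSup (hbdd x hx) g, le_abs_self (g.1 z - g.1 x), hL g.1 g.2]
  refine ⟨D, fun x z hseg => ?_, by simp [D], fun g hg x hx => le_ciSup (hbdd x hx) ⟨g, hg⟩⟩
  have hxΩ := hseg (left_mem_segment ℝ x z)
  have hzΩ := hseg (right_mem_segment ℝ x z)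
  rw [abs_sub_le_iff, sub_le_iff_le_add, sub_le_iff_le_add]
  exact ⟨hD x hxΩ z _ fun g hg => hg x z hseg,
    hD z hzΩ x _ fun g hg => abs_sub_comm (g z) (g x) ▸ hg x z hseg⟩

end Dominated

section AEBound

lemma ae_abs_deriv_le_of_abs_sub_le_integral {G φ : ℝ → ℝ} {T : Set ℝ}
    (hφ : LocallyIntegrable φ volume)
    (h : ∀ t ∈ T, ∀ᶠ s in 𝓝[>] t, |G s - G t| ≤ ∫ x in t..s, φ x) :
    ∀ᵐ t, t ∈ T → DifferentiableAt ℝ G t → |deriv G t| ≤ φ t := by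
  filter_upwards [LocallyIntegrable.ae_hasDerivAt_integral hφ] with t hφt ht hGt
  have hle : 𝓝[>] t ≤ 𝓝[≠] t := nhdsWithin_mono t fun _ => (ne_of_gt : t < _ → _)
  refine le_of_tendsto_of_tendsto
    ((hasDerivAt_iff_tendsto_slope.1 hGt.hasDerivAt).mono_left hle).abs
    ((hasDerivAt_iff_tendsto_slope.1 (hφt t)).mono_left hle) ?_
  filter_upwards [h t ht, self_mem_nhdsWithin] with s hs hts
  have hpos : 0 < s - t := sub_pos.2 hts
  rw [slope_def_field, slope_def_field, abs_div, abs_of_pos hpos,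
    intervalIntegral.integral_same, sub_zero]
  gcongr

variable {E V : Type*} [NormedAddCommGroup E] [NormedSpace ℝ E] [NormedAddCommGroup V]
  [NormedSpace ℝ V] {f : E → V} {g : E → ℝ} {s Ω : Set E}

lemma segment_add_smul_add_smul (y ξ : E) {a b : ℝ} (hab : a ≤ b) :
    segment ℝ (y + a • ξ) (y + b • ξ) = (fun t : ℝ => y + t • ξ) '' Icc a b := by
  rw [← segment_eq_Icc hab]
  have hline : (fun t : ℝ => y + t • ξ) = AffineMap.lineMap y (y + ξ) := by
    funext t
    simp [AffineMap.lineMap_apply, add_comm]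
  rw [hline, image_segment]
  simp only [← hline]

lemma Dominated.ae_abs_lineDeriv_le_of_lipschitzOnWith [CompleteSpace V] (hg : Dominated f s g)
    (hs : IsOpen s) {K : ℝ≥0} (hf : LipschitzOnWith K f s) (y ξ : E) :
    ∀ᵐ t : ℝ, y + t • ξ ∈ s → DifferentiableAt ℝ g (y + t • ξ) →
      |lineDeriv ℝ g (y + t • ξ) ξ| ≤ ‖lineDeriv ℝ f (y + t • ξ) ξ‖ := by
  have hline : Continuous fun t : ℝ => y + t • ξ := by fun_prop
  let T : Set ℝ := {t | y + t • ξ ∈ s}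
  have hT : IsOpen T := hs.preimage hline
  let φ : ℝ → ℝ := T.indicator fun t => ‖lineDeriv ℝ f (y + t • ξ) ξ‖
  have hφ : LocallyIntegrable φ volume := by
    refine (memLp_top_of_bound (((stronglyMeasurable_norm_lineDeriv f y ξ).indicator
      hT.measurableSet).aestronglyMeasurable) (K * ‖ξ‖) (.of_forall fun t => ?_)).locallyIntegrable
      le_top
    by_cases ht : t ∈ T
    · simpa [φ, ht] using norm_lineDeriv_le_of_lipschitzOn ℝ (hs.mem_nhds ht) hf (v := ξ)
    · simpa [φ, ht] using mul_nonneg K.coe_nonneg (norm_nonneg ξ)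
  have hle : ∀ t ∈ T, ∀ᶠ τ in 𝓝[>] t, |g (y + τ • ξ) - g (y + t • ξ)| ≤ ∫ σ in t..τ, φ σ := by
    intro t ht
    obtain ⟨r, hr, hball⟩ := isOpen_iff.1 hs _ ht
    filter_upwards [mem_nhdsWithin_of_mem_nhds ((isOpen_ball.preimage hline).mem_nhds
      (mem_ball_self hr)), self_mem_nhdsWithin] with τ hτ htτ
    have hseg : segment ℝ (y + t • ξ) (y + τ • ξ) ⊆ s :=
      ((convex_ball _ r).segment_subset (mem_ball_self hr) hτ).trans hball
    have hIcc : Icc t τ ⊆ T := by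
      rwa [segment_add_smul_add_smul y ξ (le_of_lt htτ), image_subset_iff] at hseg
    refine (hg _ _ hseg).trans_eq ?_
    rw [segLength_add_smul f y ξ (le_of_lt htτ)]
    refine intervalIntegral.integral_congr fun σ hσ => ?_
    rw [uIcc_of_le (le_of_lt htτ)] at hσ
    exact (indicator_of_mem (hIcc hσ) fun t => ‖lineDeriv ℝ f (y + t • ξ) ξ‖).symm
  filter_upwards [ae_abs_deriv_le_of_abs_sub_le_integral hφ hle] with t ht hts hgt
  have hderiv := ht hts (hgt.comp t (by fun_prop))
  rw [deriv_add_smul_eq_lineDeriv] at hderiv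
  exact hderiv.trans_eq (indicator_of_mem (show t ∈ T from hts) _)

variable [FiniteDimensional ℝ E]

lemma wedgeEqZero_of_finrank_range_le_one {A : E →L[ℝ] V}
    (hA : Module.finrank ℝ (LinearMap.range (A : E →ₗ[ℝ] V)) ≤ 1) {α β : E →L[ℝ] ℝ}
    (hα : ∀ ξ, A ξ = 0 → α ξ = 0) (hβ : ∀ ξ, A ξ = 0 → β ξ = 0) : WedgeEqZero α β := by
  obtain ⟨v, hv⟩ := finrank_le_one_iff.1 hA
  intro ξ ζ
  obtain ⟨a, ha⟩ := hv ⟨A ξ, ξ, rfl⟩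
  obtain ⟨b, hb⟩ := hv ⟨A ζ, ζ, rfl⟩
  replace ha : a • (v : V) = A ξ := congrArg Subtype.val ha
  replace hb : b • (v : V) = A ζ := congrArg Subtype.val hb
  obtain rfl | ha₀ := eq_or_ne a 0
  · have hξ : A ξ = 0 := by rw [← ha, zero_smul]
    rw [hα ξ hξ, hβ ξ hξ, zero_mul, mul_zero]
  · have hker : A (b • ξ - a • ζ) = 0 := by
      rw [map_sub, map_smul, map_smul, ← ha, ← hb, smul_comm, sub_self]
    have hαab : b * α ξ = a * α ζ := by simpa [sub_eq_zero] using hα _ hker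
    have hβab : b * β ξ = a * β ζ := by simpa [sub_eq_zero] using hβ _ hker
    refine mul_left_cancel₀ ha₀ ?_
    linear_combination β ξ * hαab - α ξ * hβab

variable [FiniteDimensional ℝ V] [MeasurableSpace E] [BorelSpace E]
  {μ : Measure E} [μ.IsAddHaarMeasure]

lemma Dominated.ae_abs_fderiv_apply_le_of_lipschitzOnWith (hg : Dominated f s g)
    (hs : IsOpen s) {K : ℝ≥0} (hf : LipschitzOnWith K f s) (ξ : E) :
    ∀ᵐ x ∂μ, x ∈ s → DifferentiableAt ℝ f x → DifferentiableAt ℝ g x →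
      |fderiv ℝ g x ξ| ≤ ‖fderiv ℝ f x ξ‖ := by
  have : CompleteSpace V := FiniteDimensional.complete ℝ V
  borelize V
  refine ae_mem_of_ae_add_linearMap_mem (ContinuousLinearMap.toSpanSingleton ℝ ξ).toLinearMap
    volume μ ?_ fun y => ?_
  · exact hs.measurableSet.imp <| (measurableSet_of_differentiableAt ℝ f).imp <|
      (measurableSet_of_differentiableAt ℝ g).imp <| measurableSet_le
        (measurable_fderiv_apply_const ℝ g ξ).norm (measurable_fderiv_apply_const ℝ f ξ).norm
  · filter_upwards [hg.ae_abs_lineDeriv_le_of_lipschitzOnWith hs hf y ξ] with t ht hts hft hgt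
    have hle := ht hts hgt
    exact hft.lineDeriv_eq_fderiv ▸ hgt.lineDeriv_eq_fderiv ▸ hle

lemma Dominated.ae_abs_fderiv_le (hg : Dominated f Ω g) (hf : LocLipOn f Ω) :
    ∀ᵐ x ∂μ, x ∈ Ω → ∀ ξ, |fderiv ℝ g x ξ| ≤ ‖fderiv ℝ f x ξ‖ := by
  refine ae_imp_of_forall_exists_ball fun x hx => ?_
  obtain ⟨r, hr, hball, K, hK⟩ := hf x hx
  refine ⟨r, hr, ?_⟩
  have hdense : ∀ᵐ y ∂μ, ∀ k, y ∈ ball x r → DifferentiableAt ℝ f y → DifferentiableAt ℝ g y →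
      |fderiv ℝ g y (TopologicalSpace.denseSeq E k)| ≤
        ‖fderiv ℝ f y (TopologicalSpace.denseSeq E k)‖ :=
    ae_all_iff.2 fun k =>
      (hg.mono hball).ae_abs_fderiv_apply_le_of_lipschitzOnWith isOpen_ball hK _
  filter_upwards [hdense, hf.ae_differentiableAt (μ := μ), (hg.locLipOn hf).ae_differentiableAt
    (μ := μ)] with y hy hfy hgy hyx
  exact isClosed_property (TopologicalSpace.denseRange_denseSeq E)
    (isClosed_le (by fun_prop) (by fun_prop)) fun k => hy k hyx (hfy (hball hyx)) (hgy (hball hyx))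

lemma Dominated.ae_wedgeEqZero (hg : Dominated f Ω g) (hf : LocLipOn f Ω)
    (hrank : ∀ᵐ x ∂μ, x ∈ Ω → derivRank f x ≤ 1) (ℓ : V →L[ℝ] ℝ) :
    ∀ᵐ x ∂μ, x ∈ Ω → WedgeEqZero (fderiv ℝ g x) (fderiv ℝ (fun y => ℓ (f y)) x) := by
  filter_upwards [hrank, hg.ae_abs_fderiv_le (μ := μ) hf, hf.ae_differentiableAt (μ := μ)]
    with x hrankx hgx hfx hx
  refine wedgeEqZero_of_finrank_range_le_one (hrankx hx) (fun ξ hξ => ?_) fun ξ hξ => ?_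
  · simpa [hξ] using hgx hx ξ
  · have hcomp : fderiv ℝ (fun y => ℓ (f y)) x = ℓ ∘L fderiv ℝ f x :=
      (ℓ.hasFDerivAt.comp x (hfx hx).hasFDerivAt).fderiv
    rw [hcomp, ContinuousLinearMap.comp_apply, hξ, map_zero]

end AEBound

section Oscillation

variable {E V : Type*} [NormedAddCommGroup E] {D h u v : E → ℝ} {Ω : Set E}

lemma IsPrimitiveOn.continuousOn (hh : IsPrimitiveOn u v h Ω) (hΩ : IsOpen Ω)
    (hv : ContinuousOn v Ω) : ContinuousOn h Ω := by
  intro x hx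
  have hsq : Filter.Tendsto (fun z => ‖z - x‖ ^ 2) (𝓝 x) (𝓝 0) := by
    have hcont : Continuous fun z => ‖z - x‖ ^ 2 := by fun_prop
    simpa using hcont.tendsto x
  have hrem := (hh x hx).trans_tendsto hsq
  have hmain : Filter.Tendsto (fun z => h x + u x * (v z - v x)) (𝓝 x) (𝓝 (h x)) := by
    simpa using tendsto_const_nhds.add
      (((hv.continuousAt (hΩ.mem_nhds hx)).sub_const (v x)).const_mul (u x))
  refine ContinuousAt.continuousWithinAt ?_
  simpa [ContinuousAt] using hrem.add hmain

variable [NormedSpace ℝ E] [NormedAddCommGroup V] [NormedSpace ℝ V] {f : E → V}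

lemma eventually_abs_min_sub_min_add_le_segLength (hΩ : IsOpen Ω) (hD : Dominated f Ω D)
    (hDc : ContinuousOn D Ω) (hv : Dominated f Ω v) {x : E} (hx : x ∈ Ω) {a c ε : ℝ} (hε : 0 < ε)
    (ha : |a| ≤ ε) (ha₀ : D x ≤ c → a = 0) :
    ∀ᶠ z in 𝓝 x, |min (D z) c - min (D x) c| + |a| * |v z - v x| / ε ≤ segLength f x z := by
  obtain ⟨r, hr, hball⟩ := isOpen_iff.1 hΩ x hx
  have hseg : ∀ z ∈ ball x r, segment ℝ x z ⊆ Ω := fun z hz =>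
    ((convex_ball x r).segment_subset (mem_ball_self hr) hz).trans hball
  obtain hxc | hxc := le_or_gt (D x) c
  · filter_upwards [ball_mem_nhds x hr] with z hz
    rw [ha₀ hxc, abs_zero, zero_mul, zero_div, add_zero]
    exact hD.lipschitzWith_one_comp (LipschitzWith.id.min_const c) x z (hseg z hz)
  · filter_upwards [ball_mem_nhds x hr, (hDc.continuousAt (hΩ.mem_nhds hx)).eventually
      (lt_mem_nhds hxc)] with z hz hzc
    rw [min_eq_right hzc.le, min_eq_right hxc.le, sub_self, abs_zero, zero_add, div_le_iff₀' hε]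
    exact mul_le_mul ha (hv x z (hseg z hz)) (abs_nonneg _) hε.le

/-- Where `D ≤ c` the differential `u dv` vanishes, so that only `min D c` varies; where `c < D`
only `h` varies, at most `ε` times as fast as `v`. -/
lemma dominated_min_add_abs_sub_div [CompleteSpace V] (hf : LocLipOn f Ω) (hD : Dominated f Ω D)
    (hv : Dominated f Ω v) (hh : IsPrimitiveOn u v h Ω) {c ε : ℝ} (hε : 0 < ε)
    (hu : ∀ x ∈ Ω, |u x| ≤ ε) (hu₀ : ∀ x ∈ Ω, D x ≤ c → u x = 0) (x₀ : E) :
    Dominated f Ω fun x => min (D x) c + |h x - h x₀| / ε := by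
  have hDc : ContinuousOn D Ω := (hD.locLipOn hf).continuousOn
  have hhc := hh.continuousOn hf.isOpen (hv.locLipOn hf).continuousOn
  have hdiff : ∀ z x, |min (D z) c + |h z - h x₀| / ε - (min (D x) c + |h x - h x₀| / ε)| ≤
      |min (D z) c - min (D x) c| + |h z - h x| / ε := fun z x => by
    have habs := abs_abs_sub_abs_le (h z - h x₀) (h x - h x₀)
    rw [sub_sub_sub_cancel_right] at habs
    rw [add_sub_add_comm, ← sub_div]
    refine (abs_add_le _ _).trans ?_
    rw [abs_div, abs_of_pos hε]
    gcongr
  refine dominated_of_eventually_abs_sub_le hf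
    ((hDc.inf continuousOn_const).add ((hhc.sub continuousOn_const).abs.div_const _))
    fun x hx => ?_
  obtain ⟨C, hC⟩ := (hh x hx).bound
  refine ⟨C / ε, ?_⟩
  filter_upwards [hC, eventually_abs_min_sub_min_add_le_segLength hf.isOpen hD hDc hv hx hε
    (hu x hx) (hu₀ x hx)] with z hz hle
  have hzx : |h z - h x| ≤ |u x| * |v z - v x| + C * ‖z - x‖ ^ 2 := by
    rw [Real.norm_eq_abs, Real.norm_of_nonneg (by positivity)] at hz
    rw [← abs_mul]
    linarith [abs_sub_abs_le_abs_sub (h z - h x) (u x * (v z - v x))]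
  refine (hdiff z x).trans ?_
  have hdiv := div_le_div_of_nonneg_right hzx hε.le
  rw [add_div, mul_div_right_comm C] at hdiv
  linarith

lemma abs_sub_le_of_abs_primitive_sub_le {A : Set E} (hA : IsOpen A) (hAc : IsPreconnected A)
    (hh : IsPrimitiveOn u v h A) {ε R a : ℝ} (hε : 0 < ε) (hu : ∀ x ∈ A, u x = ε)
    (hR : ∀ x ∈ A, |h x - a| ≤ ε * R) {x y : E} (hx : x ∈ A) (hy : y ∈ A) :
    |v x - v y| ≤ 2 * R := by
  have hconst : h x - ε * v x = h y - ε * v y := by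
    refine eq_of_isBigO_norm_sub_sq hA hAc (g := fun x => h x - ε * v x) (fun x hx => ?_) hx hy
    refine (hh x hx).congr_left fun z => ?_
    rw [hu x hx]
    ring
  have hdiff : ε * |v x - v y| = |(h x - a) - (h y - a)| := by
    have hmul : ε * (v x - v y) = (h x - a) - (h y - a) := by linear_combination -hconst
    rw [← hmul, abs_mul, abs_of_pos hε]
  refine le_of_mul_le_mul_left ?_ hε
  rw [hdiff]
  linarith [abs_sub (h x - a) (h y - a), hR x hx, hR y hy]

variable [FiniteDimensional ℝ E] [FiniteDimensional ℝ V] [MeasurableSpace E] [BorelSpace E]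
  {μ : Measure E} [μ.IsAddHaarMeasure]

/-- The maximality of `D`, tested against `min D c + |h - h x₀| / ε` where `h` is a primitive of
`max 0 (min (D - c) ε) d(ℓ ∘ f)`, bounds `|h - h x₀|` by `ε R` on `A`, and there `h - ε (ℓ ∘ f)` is
constant. -/
lemma norm_sub_le_of_dominated_maximal (hΩsc : SimplyConnectedSpace Ω) (hf : LocLipOn f Ω)
    (hrank : ∀ᵐ x ∂μ, x ∈ Ω → derivRank f x ≤ 1) (hD : Dominated f Ω D) {x₀ : E} (hD₀ : D x₀ = 0)
    (hDmax : ∀ g, Dominated f Ω g → ∀ x ∈ Ω, g x - g x₀ ≤ D x) {A : Set E} (hA : IsOpen A)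
    (hAc : IsPreconnected A) (hAΩ : A ⊆ Ω) {c ε R : ℝ} (hε : 0 < ε)
    (hAD : ∀ x ∈ A, D x ∈ Icc (c + ε) (c + R)) {x y : E} (hx : x ∈ A) (hy : y ∈ A) :
    ‖f x - f y‖ ≤ 2 * R := by
  have : CompleteSpace V := FiniteDimensional.complete ℝ V
  obtain ⟨ℓ, hℓ, hℓxy⟩ := exists_dual_vector'' ℝ (f x - f y)
  let u : E → ℝ := fun x => max 0 (min (D x - c) ε)
  have huf : Dominated f Ω u := hD.lipschitzWith_one_comp
    (((IsometryEquiv.subRight c).isometry.lipschitz.min_const ε).const_max 0)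
  have hvf : Dominated f Ω fun x => ℓ (f x) := dominated_clm_comp hf hℓ
  obtain ⟨h, hh⟩ := exists_isPrimitiveOn hΩsc (huf.locLipOn hf) (hvf.locLipOn hf)
    (huf.ae_wedgeEqZero (μ := μ) hf hrank ℓ)
  have hu_le : ∀ x ∈ Ω, |u x| ≤ ε := fun x _ =>
    abs_le.2 ⟨(neg_nonpos.2 hε.le).trans (le_max_left _ _), max_le hε.le (min_le_right _ _)⟩
  have hu₀ : ∀ x ∈ Ω, D x ≤ c → u x = 0 := fun x _ hxc =>
    max_eq_left ((min_le_left _ _).trans (sub_nonpos.2 hxc))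
  have hg := dominated_min_add_abs_sub_div hf hD hvf hh hε hu_le hu₀ x₀
  have hhA : ∀ z ∈ A, |h z - h x₀| ≤ ε * R := fun z hz => by
    have hmax := hDmax _ hg z (hAΩ hz)
    obtain ⟨hcz, hzR⟩ := hAD z hz
    rw [min_eq_right (by linarith), sub_self, abs_zero, zero_div, add_zero, hD₀] at hmax
    rw [mul_comm, ← div_le_iff₀ hε]
    linarith [min_le_left 0 c]
  have huA : ∀ z ∈ A, u z = ε := fun z hz => by
    simp [u, min_eq_right (le_sub_iff_add_le'.2 (hAD z hz).1), hε.le]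
  have hℓ_le := abs_sub_le_of_abs_primitive_sub_le hA hAc (fun z hz => hh z (hAΩ hz)) hε huA hhA
    hx hy
  rw [← map_sub, hℓxy] at hℓ_le
  exact (le_abs_self _).trans hℓ_le

end Oscillation

section Construction

lemma exists_contDiffOn_dist_lt {E F : Type*} [NormedAddCommGroup E] [NormedSpace ℝ E]
    [FiniteDimensional ℝ E] [NormedAddCommGroup F] [NormedSpace ℝ F] {Ω : Set E} (hΩ : IsOpen Ω)
    {g : E → F} (hg : ContinuousOn g Ω) {ε : E → ℝ} (hε : ContinuousOn ε Ω)
    (hε₀ : ∀ x ∈ Ω, 0 < ε x) (n : ℕ∞) :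
    ∃ a : E → F, ContDiffOn ℝ n a Ω ∧ ∀ x ∈ Ω, dist (a x) (g x) < ε x := by
  let U : TopologicalSpace.Opens E := ⟨Ω, hΩ⟩
  have : LocallyCompactSpace U := hΩ.locallyCompactSpace
  obtain ⟨a, ha, -⟩ := (continuousOn_iff_continuous_domRestrict.1 hg).exists_contMDiff_approx
    (M := U) (modelWithCornersSelf ℝ E) n (continuousOn_iff_continuous_domRestrict.1 hε)
    fun x => hε₀ x x.2
  have hext : ∀ x : U, Function.extend Subtype.val a 0 (x : E) = a x :=
    Subtype.val_injective.extend_apply a 0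
  refine ⟨Function.extend Subtype.val a 0, fun x hx => ContDiffAt.contDiffWithinAt ?_,
    fun x hx => hext ⟨x, hx⟩ ▸ ha ⟨x, hx⟩⟩
  refine (contMDiffAt_subtype_iff (U := U) (x := ⟨x, hx⟩).1 ?_).contDiffAt
  simpa only [hext] using a.contMDiff.contMDiffAt

lemma derivRank_le_one_of_eventuallyEq {E V : Type*} [NormedAddCommGroup E] [NormedSpace ℝ E]
    [NormedAddCommGroup V] [NormedSpace ℝ V] {F : E → V} {s : E → ℝ} {x : E} {P Q : V}
    (hs : DifferentiableAt ℝ s x) (hF : F =ᶠ[𝓝 x] fun y => P + s y • Q) : derivRank F x ≤ 1 := by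
  have hderiv : fderiv ℝ F x = (fderiv ℝ s x).smulRight Q := by
    rw [hF.fderiv_eq, ((hs.hasFDerivAt.smul_const Q).const_add P).fderiv]
  have hrange : LinearMap.range (fderiv ℝ F x : E →ₗ[ℝ] V) ≤ Submodule.span ℝ {Q} := by
    rw [hderiv]
    rintro _ ⟨v, rfl⟩
    exact Submodule.smul_mem _ _ (Submodule.mem_span_singleton_self Q)
  exact (Submodule.finrank_mono hrange).trans ((finrank_span_le_card _).trans (by simp))

lemma exists_eventually_eq_connectedComponentIn {X Y : Type*} [TopologicalSpace X]
    [LocallyConnectedSpace X] (f : X → Y) {S : Set X} (hS : IsOpen S) :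
    ∃ p : X → Y, ∀ x ∈ S, (∀ᶠ y in 𝓝 x, p y = p x) ∧
      ∃ y ∈ connectedComponentIn S x, p x = f y := by
  refine ⟨fun x => f (@Classical.epsilon X ⟨x⟩ (· ∈ connectedComponentIn S x)),
    fun x hx => ⟨?_, ?_⟩⟩
  · filter_upwards [hS.connectedComponentIn.mem_nhds (mem_connectedComponentIn hx)] with y hy
    rw [connectedComponentIn_eq hy]
  · exact ⟨_, Classical.epsilon_spec ⟨x, mem_connectedComponentIn hx⟩, rfl⟩

/-- A smooth monotone function equal to `0` for `t ≤ 1 / 4` and to `1` for `3 / 4 ≤ t`. -/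
noncomputable def smoothStep (t : ℝ) : ℝ := Real.smoothTransition (2 * t - 1 / 2)

lemma smoothStep_of_le {t : ℝ} (ht : t ≤ 1 / 4) : smoothStep t = 0 :=
  Real.smoothTransition.zero_of_nonpos (by linarith)

lemma smoothStep_of_ge {t : ℝ} (ht : 3 / 4 ≤ t) : smoothStep t = 1 :=
  Real.smoothTransition.one_of_one_le (by linarith)

lemma contDiff_smoothStep {n : ℕ∞} : ContDiff ℝ n smoothStep :=
  Real.smoothTransition.contDiff.comp ((contDiff_const.mul contDiff_id).sub contDiff_const)

section Staircase

variable {X V : Type*} {a : X → ℝ} {p : ℤ → X → V} {x : X}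

/-- The interpolation between the values `p k x`, `k ∈ ℤ`, that takes the value `p k x` where
`a x = k` and passes smoothly from `p k x` to `p (k + 1) x` as `a x` runs from `k` to `k + 1`. -/
noncomputable def staircase [AddCommGroup V] [Module ℝ V] (a : X → ℝ) (p : ℤ → X → V) (x : X) : V :=
  p ⌊a x⌋ x + smoothStep (a x - ⌊a x⌋) • (p (⌊a x⌋ + 1) x - p ⌊a x⌋ x)

lemma exists_staircase_eventuallyEq [AddCommGroup V] [Module ℝ V] [TopologicalSpace X]
    (ha : ContinuousAt a x)
    (hp : ∀ k : ℤ, a x ∈ Ioo (k - 1 : ℝ) (k + 1) → ∀ᶠ y in 𝓝 x, p k y = p k x) :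
    ∃ (P Q : V) (k : ℤ), staircase a p =ᶠ[𝓝 x] fun y => P + smoothStep (a y - k) • Q := by
  have hlt := Int.lt_floor_add_one (a x)
  have hk := hp ⌊a x⌋ ⟨by linarith [Int.floor_le (a x)], hlt⟩
  obtain hfl | hfl := (Int.floor_le (a x)).lt_or_eq
  · refine ⟨p ⌊a x⌋ x, p (⌊a x⌋ + 1) x - p ⌊a x⌋ x, ⌊a x⌋, ?_⟩
    filter_upwards [hk, hp (⌊a x⌋ + 1) ⟨by push_cast; linarith, by push_cast; linarith⟩,
      ha.eventually (lt_mem_nhds hfl), ha.eventually (gt_mem_nhds hlt)] with y hy hy' hlty hgty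
    rw [staircase, Int.floor_eq_iff.2 ⟨hlty.le, hgty⟩, hy, hy']
  · refine ⟨p ⌊a x⌋ x, 0, ⌊a x⌋, ?_⟩
    filter_upwards [hk, ha.eventually (lt_mem_nhds (show ⌊a x⌋ - 1 / 4 < a x by linarith)),
      ha.eventually (gt_mem_nhds (show a x < ⌊a x⌋ + 1 / 4 by linarith))] with y hy hlty hgty
    rw [smul_zero, add_zero, ← hy, staircase]
    obtain hle | hgt := le_or_gt (⌊a x⌋ : ℝ) (a y)
    · rw [Int.floor_eq_iff.2 ⟨hle, by linarith⟩, smoothStep_of_le (by linarith), zero_smul,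
        add_zero]
    · have hfloor : ⌊a y⌋ = ⌊a x⌋ - 1 :=
        Int.floor_eq_iff.2 ⟨by push_cast; linarith, by push_cast; linarith⟩
      rw [hfloor, smoothStep_of_ge (by push_cast; linarith), one_smul, sub_add_cancel,
        add_sub_cancel]

lemma norm_staircase_sub_le [NormedAddCommGroup V] [NormedSpace ℝ V] {v : V} {δ : ℝ}
    (hp : ∀ k : ℤ, a x ∈ Ioo (k - 1 : ℝ) (k + 1) → ‖p k x - v‖ ≤ δ) :
    ‖staircase a p x - v‖ ≤ δ := by
  have hlt := Int.lt_floor_add_one (a x)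
  have hk := hp ⌊a x⌋ ⟨by linarith [Int.floor_le (a x)], hlt⟩
  obtain hfl | hfl := (Int.floor_le (a x)).lt_or_eq
  · have hk' := hp (⌊a x⌋ + 1) ⟨by push_cast; linarith, by push_cast; linarith⟩
    rw [← mem_closedBall_iff_norm] at hk hk' ⊢
    exact (convex_closedBall v δ).add_smul_sub_mem hk hk'
      ⟨Real.smoothTransition.nonneg _, Real.smoothTransition.le_one _⟩
  · rwa [staircase, smoothStep_of_le (by linarith), zero_smul, add_zero]

end Staircase

variable {E V : Type*} [NormedAddCommGroup E] [NormedSpace ℝ E] [NormedAddCommGroup V]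
  [NormedSpace ℝ V] {f : E → V} {Ω : Set E}

lemma exists_contDiffOn_derivRank_le_one_norm_sub_le (hΩ : IsOpen Ω) {a : E → ℝ} {n : ℕ∞}
    (hn : n ≠ 0) (ha : ContDiffOn ℝ n a Ω) {δ : ℝ}
    (hosc : ∀ (k : ℤ) (A : Set E), IsOpen A → IsPreconnected A → A ⊆ Ω →
      MapsTo a A (Ioo (k - 1) (k + 1)) → ∀ x ∈ A, ∀ y ∈ A, ‖f x - f y‖ ≤ δ) :
    ∃ F : E → V, ContDiffOn ℝ n F Ω ∧ (∀ x ∈ Ω, derivRank F x ≤ 1) ∧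
      ∀ x ∈ Ω, ‖F x - f x‖ ≤ δ := by
  let S : ℤ → Set E := fun k => Ω ∩ a ⁻¹' Ioo (k - 1) (k + 1)
  have hS : ∀ k, IsOpen (S k) := fun k => ha.continuousOn.isOpen_inter_preimage hΩ isOpen_Ioo
  choose p hp using fun k => exists_eventually_eq_connectedComponentIn f (hS k)
  have hform : ∀ x ∈ Ω, ∃ (P Q : V) (k : ℤ),
      staircase a p =ᶠ[𝓝 x] fun y => P + smoothStep (a y - k) • Q := fun x hx =>
    exists_staircase_eventuallyEq (ha.continuousOn.continuousAt (hΩ.mem_nhds hx))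
      fun k hk => (hp k x ⟨hx, hk⟩).1
  have hstep : ∀ k : ℤ, ∀ x ∈ Ω, ContDiffAt ℝ n (fun y => smoothStep (a y - k)) x :=
    fun k x hx => contDiff_smoothStep.contDiffAt.comp x
      ((ha.contDiffAt (hΩ.mem_nhds hx)).sub contDiffAt_const)
  refine ⟨staircase a p, fun x hx => ?_, fun x hx => ?_, fun x hx => ?_⟩
  · obtain ⟨P, Q, k, hPQ⟩ := hform x hx
    exact ((contDiffAt_const.add ((hstep k x hx).smul contDiffAt_const)).congr_of_eventuallyEq
      hPQ).contDiffWithinAt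
  · obtain ⟨P, Q, k, hPQ⟩ := hform x hx
    exact derivRank_le_one_of_eventuallyEq ((hstep k x hx).differentiableAt (by exact_mod_cast hn))
      hPQ
  · refine norm_staircase_sub_le fun k hk => ?_
    obtain ⟨y, hy, hpy⟩ := (hp k x ⟨hx, hk⟩).2
    have hsub : connectedComponentIn (S k) x ⊆ S k := connectedComponentIn_subset _ _
    rw [hpy]
    exact hosc k _ (hS k).connectedComponentIn isPreconnected_connectedComponentIn
      (fun z hz => (hsub hz).1) (fun z hz => (hsub hz).2) y hy x (mem_connectedComponentIn ⟨hx, hk⟩)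

variable [FiniteDimensional ℝ E] [FiniteDimensional ℝ V] [MeasurableSpace E] [BorelSpace E]
  {μ : Measure E} [μ.IsAddHaarMeasure]

lemma exists_smooth_derivRank_le_one_norm_sub_le (hΩsc : SimplyConnectedSpace Ω)
    (hf : LocLipOn f Ω) (hrank : ∀ᵐ x ∂μ, x ∈ Ω → derivRank f x ≤ 1) {ε : ℝ} (hε : 0 < ε) :
    ∃ F : E → V, ContDiffOn ℝ (⊤ : ℕ∞) F Ω ∧ (∀ x ∈ Ω, derivRank F x ≤ 1) ∧
      ∀ x ∈ Ω, ‖F x - f x‖ ≤ 10 * ε := by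
  obtain ⟨x₀, hx₀⟩ : Ω.Nonempty := nonempty_coe_sort.1 inferInstance
  obtain ⟨D, hD, hD₀, hDmax⟩ := exists_dominated_forall_sub_le
    (isPreconnected_iff_preconnectedSpace.2 inferInstance) hf hx₀
  obtain ⟨b, hb, hbD⟩ := exists_contDiffOn_dist_lt hf.isOpen (hD.locLipOn hf).continuousOn
    (continuousOn_const (c := ε)) (fun _ _ => hε) ⊤
  refine exists_contDiffOn_derivRank_le_one_norm_sub_le hf.isOpen (by simp) (hb.div_const ε)
    fun k A hA hAc hAΩ hbA x hx y hy => ?_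
  have hAD : ∀ z ∈ A, D z ∈ Icc ((k - 3) * ε + ε) ((k - 3) * ε + 5 * ε) := fun z hz => by
    obtain ⟨hlt, hgt⟩ := hbA hz
    rw [lt_div_iff₀ hε] at hlt
    rw [div_lt_iff₀ hε] at hgt
    have hdist := abs_lt.1 (hbD z (hAΩ hz))
    constructor <;> linarith
  refine (norm_sub_le_of_dominated_maximal hΩsc hf hrank hD hD₀ hDmax hA hAc hAΩ hε hAD hx
    hy).trans_eq ?_
  ring

end Construction

theorem smooth_rank_one_approximation_general {E V : Type*} [NormedAddCommGroup E]
    [NormedSpace ℝ E] [FiniteDimensional ℝ E] [NormedAddCommGroup V] [NormedSpace ℝ V]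
    [FiniteDimensional ℝ V] [MeasurableSpace E] [BorelSpace E] (μ : Measure E)
    [μ.IsAddHaarMeasure] (Ω : Set E) (hΩsc : SimplyConnectedSpace Ω) (f : E → V)
    (hf : LocLipOn f Ω) (hrank : ∀ᵐ x ∂μ, x ∈ Ω → derivRank f x ≤ 1) :
    ∃ F : ℕ → E → V, (∀ i, ContDiffOn ℝ (⊤ : ℕ∞) (F i) Ω) ∧
      (∀ i, ∀ x ∈ Ω, derivRank (F i) x ≤ 1) ∧ TendstoUniformlyOn F f Filter.atTop Ω := by
  choose F hF hFrank hFf using fun i : ℕ =>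
    exists_smooth_derivRank_le_one_norm_sub_le hΩsc hf hrank (Nat.one_div_pos_of_nat (n := i))
  refine ⟨F, hF, hFrank, tendstoUniformlyOn_iff.2 fun η hη => ?_⟩
  have hlim : Filter.Tendsto (fun i : ℕ => 10 * (1 / ((i : ℝ) + 1))) Filter.atTop (𝓝 0) := by
    simpa using tendsto_one_div_add_atTop_nhds_zero_nat.const_mul (10 : ℝ)
  filter_upwards [hlim.eventually_lt_const hη] with i hi x hx
  rw [dist_comm, dist_eq_norm]
  exact (hFf i x hx).trans_lt hi

/-- Main theorem: if `Ω ⊆ ℝⁿ` is a simply connected domain and `f : Ω → ℝᵐ` is locally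
Lipschitz with `rank Df ≤ 1` a.e. in `Ω`, then there are `C^∞`-smooth maps
`fᵢ : Ω → ℝᵐ` with `rank Dfᵢ ≤ 1` everywhere in `Ω` converging to `f` uniformly on
every compact subset of `Ω`. -/
theorem smooth_rank_one_approximation {n m : ℕ}
    (Ω : Set (EuclideanSpace ℝ (Fin n))) (hΩo : IsOpen Ω) (hΩc : IsConnected Ω)
    (hΩsc : SimplyConnectedSpace ↥Ω)
    (f : EuclideanSpace ℝ (Fin n) → EuclideanSpace ℝ (Fin m))
    (hf : LocLipOn f Ω)
    (hrank : ∀ᵐ x ∂(volume : Measure (EuclideanSpace ℝ (Fin n))), x ∈ Ω →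
      derivRank f x ≤ 1) :
    ∃ F : ℕ → EuclideanSpace ℝ (Fin n) → EuclideanSpace ℝ (Fin m),
      (∀ i, ContDiffOn ℝ (⊤ : ℕ∞) (F i) Ω) ∧
      (∀ i, ∀ x ∈ Ω, derivRank (F i) x ≤ 1) ∧
      (∀ K : Set (EuclideanSpace ℝ (Fin n)), K ⊆ Ω → IsCompact K →
        TendstoUniformlyOn (fun i => F i) f Filter.atTop K) := by
  obtain ⟨F, hF, hFrank, hFf⟩ := smooth_rank_one_approximation_general volume Ω hΩsc f hf hrank
  exact ⟨F, hF, hFrank, fun K hK _ => hFf.mono hK⟩
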